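/- arXiv:1707.03639 — 3 statements merged into one kernel-verified Lean document; each statement's English description precedes it below -/
import Mathlib

section
/- Let G ≅ C_m ⋉_φ C_{mn} for positive integers m, n. Then E(G) = |G| + d(G) = m²n + mn + m − 2, and consequently d(G) = mn + m − 2. -/
/-- A sequence (multiset) over `G` is product-one if its terms can be ordered so
that their product equals `1`. -/
def IsProductOne {G : Type*} [Group G] (S : Multiset G) : Prop :=
  ∃ l : List G, (l : Multiset G) = S ∧ l.prod = 1

/-- A sequence is product-one free if it has no nonempty product-one subsequence. -/
def ProductOneFree {G : Type*} [Group G] (S : Multiset G) : Prop :=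
  ∀ T ≤ S, T ≠ 0 → ¬ IsProductOne T


section KsSection

open Finset

lemma ks_card_supp {p : ℕ} [Fact p.Prime] {ι : Type*} [Fintype ι] [DecidableEq ι] (I : Finset ι) :
    ((univ.filter (fun x : ι → ZMod p => univ.filter (fun i => x i ≠ 0) = I)).card : ZMod p)
      = (-1) ^ I.card := by
  have h : univ.filter (fun x : ι → ZMod p => univ.filter (fun i => x i ≠ 0) = I)
      = Fintype.piFinset (fun i => if i ∈ I then (univ.erase (0 : ZMod p)) else {0}) := by
    ext x
    simp only [mem_filter, mem_univ, true_and, Fintype.mem_piFinset, Finset.ext_iff]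
    refine forall_congr' fun i => ?_
    by_cases hi : i ∈ I <;> simp [hi]
  rw [h, Fintype.card_piFinset]
  have : ∀ i, (if i ∈ I then (univ.erase (0 : ZMod p)) else {0}).card
      = if i ∈ I then p - 1 else 1 := by
    intro i
    split_ifs <;> simp [ZMod.card]
  simp only [this]
  rw [Finset.prod_ite]
  have hp : 1 ≤ p := (Fact.out : p.Prime).one_lt.le
  simp [Nat.cast_sub hp]

lemma ks_olson_fintype {p : ℕ} [Fact p.Prime] {ι κ : Type*} [Fintype ι] [DecidableEq ι] [Fintype κ]
    [DecidableEq κ]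
    (v : ι → κ → ZMod p) (h : Fintype.card κ * (p - 1) < Fintype.card ι) :
    ∑ I : Finset ι with (∀ k, ∑ i ∈ I, v i k = 0), (-1 : ZMod p) ^ I.card = 0 := by
  have hp : 2 ≤ p := (Fact.out : p.Prime).two_le
  let f : κ → MvPolynomial ι (ZMod p) := fun k => ∑ i, MvPolynomial.C (v i k) * MvPolynomial.X i ^ (p - 1)
  have hdeg : ∀ k, (f k).totalDegree ≤ p - 1 := by
    intro k
    refine MvPolynomial.totalDegree_finsetSum_le fun i _ => ?_
    refine (MvPolynomial.totalDegree_mul _ _).trans ?_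
    simp
  have hcw := char_dvd_card_solutions_of_fintype_sum_lt (p := p) (f := f) (K := ZMod p) (by
    refine lt_of_le_of_lt (Finset.sum_le_sum fun k _ => hdeg k) ?_
    simpa using h)
  have hev : ∀ (x : ι → ZMod p) k, MvPolynomial.eval x (f k)
      = ∑ i ∈ univ.filter (fun i => x i ≠ 0), v i k := by
    intro x k
    simp only [f, map_sum, map_mul, MvPolynomial.eval_C, map_pow, MvPolynomial.eval_X]
    rw [Finset.sum_filter]
    refine Finset.sum_congr rfl fun i _ => ?_
    by_cases hi : x i = 0
    · simp [hi]; right; omega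
    · simp [hi, ZMod.pow_card_sub_one_eq_one]
  rw [← CharP.cast_eq_zero_iff (ZMod p) p, Fintype.card_subtype] at hcw
  simp only [hev] at hcw
  rw [Finset.card_eq_sum_card_fiberwise (f := fun x : ι → ZMod p => univ.filter (fun i => x i ≠ 0))
    (t := univ.filter fun I : Finset ι => ∀ k, ∑ i ∈ I, v i k = 0)] at hcw
  · refine Eq.trans ?_ hcw
    rw [Nat.cast_sum]
    refine Finset.sum_congr rfl fun I hI => ?_
    rw [← ks_card_supp I]
    congr 2
    ext x
    simp only [mem_filter, mem_univ, true_and] at hI ⊢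
    constructor
    · intro hx; rw [hx]; exact ⟨hI, rfl⟩
    · exact fun hx => hx.2
  · intro x hx
    simpa using hx

lemma ks_olson {p : ℕ} [Fact p.Prime] {ι κ : Type*} [DecidableEq ι] [Fintype κ]
    [DecidableEq κ] (J : Finset ι)
    (v : ι → κ → ZMod p) (h : Fintype.card κ * (p - 1) < J.card) :
    ∑ I ∈ J.powerset with (∀ k, ∑ i ∈ I, v i k = 0), (-1 : ZMod p) ^ I.card = 0 := by
  refine Eq.trans (Eq.symm ?_) (ks_olson_fintype (p := p) (ι := J) (fun i => v i) (by simpa using h))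
  refine Finset.sum_bij (fun I _ => I.map (Function.Embedding.subtype _)) ?_ ?_ ?_ ?_
  · intro I hI
    simp only [mem_filter, mem_univ, true_and, mem_powerset, sum_map] at hI ⊢
    refine ⟨?_, hI⟩
    intro x hx
    simp at hx
    exact hx.1
  · intro a _ b _ hab
    exact Finset.map_injective _ hab
  · intro I hI
    simp only [mem_filter, mem_powerset] at hI
    have e : (I.subtype (· ∈ J)).map (Function.Embedding.subtype _) = I :=
      Finset.subtype_map_of_mem hI.1
    refine ⟨I.subtype (· ∈ J), ?_, e⟩
    simp only [mem_filter, mem_univ, true_and]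
    intro k
    have := hI.2 k
    rw [← e, sum_map] at this
    exact this
  · intro I _
    simp

lemma ks_davenport {p : ℕ} [Fact p.Prime] {ι κ : Type*} [DecidableEq ι] [Fintype κ]
    [DecidableEq κ] (J : Finset ι)
    (v : ι → κ → ZMod p) (h : Fintype.card κ * (p - 1) < J.card) :
    ∃ I ⊆ J, I.Nonempty ∧ ∀ k, ∑ i ∈ I, v i k = 0 := by
  by_contra hcon
  push Not at hcon
  have h1 := ks_olson J v h
  rw [Finset.sum_eq_single ∅] at h1
  · simp at h1
  · intro I hI hne
    simp only [mem_filter, mem_powerset] at hI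
    obtain ⟨k, hk⟩ := hcon I hI.1 (Finset.nonempty_iff_ne_empty.2 hne)
    exact absurd (hI.2 k) hk
  · simp

/-- zero-sum predicate for two functions -/
def KsZs {p : ℕ} (f g : ℕ → ZMod p) (I : Finset ℕ) : Prop :=
  ∑ i ∈ I, f i = 0 ∧ ∑ i ∈ I, g i = 0

instance {p : ℕ} (f g : ℕ → ZMod p) : DecidablePred (KsZs f g) := fun _ =>
  inferInstanceAs (Decidable (_ ∧ _))

/-- the family of zero-sum subsets of size `s` -/
def ksF {p : ℕ} (f g : ℕ → ZMod p) (J : Finset ℕ) (s : ℕ) : Finset (Finset ℕ) :=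
  (J.powersetCard s).filter (KsZs f g)

lemma ks_mem_F {p : ℕ} {f g : ℕ → ZMod p} {J : Finset ℕ} {s : ℕ} {I : Finset ℕ} :
    I ∈ ksF f g J s ↔ I ⊆ J ∧ I.card = s ∧ KsZs f g I := by
  simp [ksF, mem_powersetCard, and_assoc]

lemma ks_F_empty {p : ℕ} {f g : ℕ → ZMod p} {J : Finset ℕ} {s : ℕ} (h : J.card < s) :
    (ksF f g J s).card = 0 := by
  simp [ksF, Finset.powersetCard_eq_empty.2 h]

lemma ks_F_zero {p : ℕ} {f g : ℕ → ZMod p} {J : Finset ℕ} :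
    (ksF f g J 0).card = 1 := by
  simp [ksF, Finset.filter_singleton, KsZs]

/-- group a signed sum by cardinality -/
lemma ks_group {p : ℕ} (f g : ℕ → ZMod p) (J : Finset ℕ) (c : ℕ → Prop) [DecidablePred c]
    (t : Finset ℕ) (ht : ∀ s ≤ J.card, c s → s ∈ t) (ht' : ∀ s ∈ t, c s) :
    ∑ I ∈ J.powerset with (KsZs f g I ∧ c I.card), (-1 : ZMod p) ^ I.card
      = ∑ s ∈ t, (-1 : ZMod p) ^ s * ((ksF f g J s).card : ZMod p) := by
  rw [← Finset.sum_fiberwise_of_maps_to (g := Finset.card) (t := t)]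
  · refine Finset.sum_congr rfl fun s hs => ?_
    have : ((J.powerset.filter (fun I => KsZs f g I ∧ c I.card)).filter (fun I => I.card = s))
        = ksF f g J s := by
      ext I
      simp only [mem_filter, mem_powerset, ks_mem_F]
      constructor
      · rintro ⟨⟨h1, h2, h3⟩, h4⟩; exact ⟨h1, h4, h2⟩
      · rintro ⟨h1, h2, h3⟩; exact ⟨⟨h1, h3, h2 ▸ ht' s hs⟩, h2⟩
    rw [this, Finset.sum_congr rfl (g := fun _ => (-1 : ZMod p) ^ s)]
    · simp [mul_comm]
    · intro I hI; rw [(ks_mem_F.1 hI).2.1]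
  · intro I hI
    simp only [mem_filter, mem_powerset] at hI
    exact ht _ (Finset.card_le_card hI.1) hI.2.2

lemma ks_L1' {p : ℕ} [Fact p.Prime] (f g : ℕ → ZMod p) (J : Finset ℕ) (h : 3 * p - 2 ≤ J.card) :
    ∑ I ∈ J.powerset with (KsZs f g I ∧ p ∣ I.card), (-1 : ZMod p) ^ I.card = 0 := by
  have hp : 2 ≤ p := (Fact.out : p.Prime).two_le
  have := ks_olson (p := p) J (fun i => ![f i, g i, 1]) (by simp; omega)
  rw [← this]
  refine Finset.sum_congr ?_ fun _ _ => rfl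
  ext I
  simp [Fin.forall_fin_succ, KsZs, and_assoc, CharP.cast_eq_zero_iff (ZMod p) p]

lemma ks_L2' {p : ℕ} [Fact p.Prime] (f g : ℕ → ZMod p) (J : Finset ℕ) (h : 3 * p - 3 ≤ J.card) :
    ∑ I ∈ J.powerset with (KsZs f g I ∧ p ∣ I.card), (-1 : ZMod p) ^ I.card
     - ∑ I ∈ J.powerset with (KsZs f g I ∧ p ∣ I.card + 1), (-1 : ZMod p) ^ I.card = 0 := by
  have hp : 2 ≤ p := (Fact.out : p.Prime).two_le
  obtain ⟨j, hj⟩ := Infinite.exists_notMem_finset J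
  have h0 := ks_olson (p := p) (insert j J)
    (fun i => ![if i = j then 0 else f i, if i = j then 0 else g i, 1])
    (by rw [card_insert_of_notMem hj]; simp; omega)
  rw [Finset.sum_filter, Finset.sum_powerset_insert hj] at h0
  rw [Finset.sum_filter, Finset.sum_filter, sub_eq_add_neg, ← Finset.sum_neg_distrib]
  refine Eq.trans ?_ h0
  congr 1
  · refine Finset.sum_congr rfl fun I hI => ?_
    have hjI : j ∉ I := fun h => hj (mem_powerset.1 hI h)
    have e : ∀ f : ℕ → ZMod p, ∑ i ∈ I, (if i = j then 0 else f i) = ∑ i ∈ I, f i := fun f =>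
      Finset.sum_congr rfl fun i hi => if_neg (fun hh : i = j => hjI (hh ▸ hi))
    simp [Fin.forall_fin_succ, KsZs, and_assoc, e, CharP.cast_eq_zero_iff (ZMod p) p]
  · refine Finset.sum_congr rfl fun I hI => ?_
    have hjI : j ∉ I := fun h => hj (mem_powerset.1 hI h)
    have e : ∀ f : ℕ → ZMod p, ∑ i ∈ I, (if i = j then 0 else f i) = ∑ i ∈ I, f i := fun f =>
      Finset.sum_congr rfl fun i hi => if_neg (fun hh : i = j => hjI (hh ▸ hi))
    have e2 : ((I.card : ZMod p) + 1 = 0) ↔ p ∣ I.card + 1 := by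
      rw [← CharP.cast_eq_zero_iff (ZMod p) p]; push_cast; rfl
    simp only [KsZs, Fin.forall_fin_succ, Finset.sum_insert hjI, card_insert_of_notMem hjI]
    simp [e, and_assoc, e2, pow_succ, add_comm (1 : ZMod p)]
    split_ifs <;> simp

section
variable {p : ℕ} [Fact p.Prime] (f g : ℕ → ZMod p)

lemma ks_sum0 (hodd : Odd p) (J : Finset ℕ) (h : J.card < 4 * p) :
    ∑ I ∈ J.powerset with (KsZs f g I ∧ p ∣ I.card), (-1 : ZMod p) ^ I.card
     = 1 - ((ksF f g J p).card : ZMod p) + (ksF f g J (2 * p)).card - (ksF f g J (3 * p)).card := by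
  have hp : 2 ≤ p := (Fact.out : p.Prime).two_le
  rw [ks_group f g J (fun s => p ∣ s) {0, p, 2 * p, 3 * p}]
  · rw [sum_insert, sum_insert, sum_insert, sum_singleton]
    · have h3 : Odd (3 * p) := by rw [Nat.odd_mul]; exact ⟨by decide, hodd⟩
      rw [hodd.neg_one_pow, h3.neg_one_pow, ks_F_zero]
      simp
      ring
    all_goals simp <;> omega
  · rintro s hs ⟨k, rfl⟩
    have hk : k < 4 := by
      by_contra hk
      have : p * 4 ≤ p * k := Nat.mul_le_mul_left _ (by omega)
      omega
    interval_cases k <;> simp <;> omega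
  · intro s hs
    simp at hs
    rcases hs with rfl | rfl | rfl | rfl <;> simp

lemma ks_sum1 (hodd : Odd p) (J : Finset ℕ) (h : J.card + 1 < 4 * p) :
    ∑ I ∈ J.powerset with (KsZs f g I ∧ p ∣ I.card + 1), (-1 : ZMod p) ^ I.card
     = ((ksF f g J (p - 1)).card : ZMod p) - (ksF f g J (2 * p - 1)).card
       + (ksF f g J (3 * p - 1)).card := by
  have hp : 2 ≤ p := (Fact.out : p.Prime).two_le
  rw [ks_group f g J (fun s => p ∣ s + 1) {p - 1, 2 * p - 1, 3 * p - 1}]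
  · rw [sum_insert, sum_insert, sum_singleton]
    · obtain ⟨k, hk⟩ := hodd
      have h1 : Even (p - 1) := ⟨k, by omega⟩
      have h2 : Odd (2 * p - 1) := ⟨p - 1, by omega⟩
      have h3 : Even (3 * p - 1) := ⟨3 * k + 1, by omega⟩
      rw [h1.neg_one_pow, h2.neg_one_pow, h3.neg_one_pow]
      ring
    all_goals simp <;> omega
  · rintro s hs ⟨k, hk⟩
    have hk4 : k < 4 := by
      by_contra hk
      have : p * 4 ≤ p * k := Nat.mul_le_mul_left _ (by omega)
      omega
    interval_cases k <;> simp <;> omega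
  · intro s hs
    simp at hs
    rcases hs with rfl | rfl | rfl
    · exact ⟨1, by omega⟩
    · exact ⟨2, by omega⟩
    · exact ⟨3, by omega⟩

lemma ks_count_between (K I : Finset ℕ) (hI : I ⊆ K) (t : ℕ) (ht : I.card ≤ t) :
    ((K.powersetCard t).filter (fun J => I ⊆ J)).card = (K.card - I.card).choose (t - I.card) := by
  rw [← Finset.card_sdiff_of_subset hI, ← Finset.card_powersetCard]
  refine Finset.card_nbij' (fun J => J \ I) (fun B => B ∪ I) ?_ ?_ ?_ ?_
  · intro J hJ
    simp only [coe_filter, mem_powersetCard, Set.mem_ofPred_eq, mem_coe] at hJ ⊢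
    refine ⟨sdiff_subset_sdiff hJ.1.1 le_rfl, ?_⟩
    rw [card_sdiff_of_subset hJ.2, hJ.1.2]
  · intro B hB
    simp only [coe_filter, mem_powersetCard, Set.mem_ofPred_eq, mem_coe] at hB ⊢
    have hd : Disjoint B I := Finset.disjoint_of_subset_left hB.1 sdiff_disjoint
    refine ⟨⟨union_subset (hB.1.trans sdiff_subset) hI, ?_⟩, subset_union_right⟩
    rw [card_union_of_disjoint hd, hB.2]; omega
  · intro J hJ
    simp only [coe_filter, mem_powersetCard, Set.mem_ofPred_eq] at hJ
    exact sdiff_union_of_subset hJ.2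
  · intro B hB
    simp only [mem_powersetCard, mem_coe] at hB
    have hd : Disjoint B I := Finset.disjoint_of_subset_left hB.1 sdiff_disjoint
    exact union_sdiff_cancel_right hd

lemma ks_avg (K : Finset ℕ) (s t : ℕ) (hst : s ≤ t) :
    ∑ J ∈ K.powersetCard t, (ksF f g J s).card
      = (K.card - s).choose (t - s) * (ksF f g K s).card := by
  have h1 : ∀ J ∈ K.powersetCard t, (ksF f g J s).card
      = ((ksF f g K s).filter (fun I => I ⊆ J)).card := by
    intro J hJ
    congr 1
    ext I
    simp only [mem_filter, ks_mem_F]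
    have := (mem_powersetCard.1 hJ).1
    constructor
    · rintro ⟨a, b, c⟩; exact ⟨⟨a.trans this, b, c⟩, a⟩
    · rintro ⟨⟨a, b, c⟩, d⟩; exact ⟨d, b, c⟩
  rw [Finset.sum_congr rfl h1]
  have := Finset.sum_card_bipartiteAbove_eq_sum_card_bipartiteBelow
    (s := K.powersetCard t) (t := ksF f g K s) (fun J I => I ⊆ J)
  simp only [bipartiteAbove, bipartiteBelow] at this
  rw [this, Finset.sum_congr rfl (g := fun _ => (K.card - s).choose (t - s))]
  · simp [mul_comm]
  · intro I hI
    obtain ⟨a, b, c⟩ := ks_mem_F.1 hI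
    rw [ks_count_between K I a t (b ▸ hst), b]

lemma ks_zs_sdiff {A B : Finset ℕ} (h : A ⊆ B) (hA : KsZs f g A) (hB : KsZs f g B) :
    KsZs f g (B \ A) := by
  refine ⟨?_, ?_⟩
  · have := Finset.sum_sdiff h (f := f)
    rw [hA.1, hB.1] at this; simpa using this
  · have := Finset.sum_sdiff h (f := g)
    rw [hA.2, hB.2] at this; simpa using this

lemma ks_zs_union {A B : Finset ℕ} (h : Disjoint A B) (hA : KsZs f g A) (hB : KsZs f g B) :
    KsZs f g (A ∪ B) := by
  refine ⟨?_, ?_⟩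
  · rw [sum_union h, hA.1, hB.1, add_zero]
  · rw [sum_union h, hA.2, hB.2, add_zero]

lemma ks_double (K : Finset ℕ) (s t : ℕ) :
    ∑ A ∈ ksF f g K s, (ksF f g (K \ A) t).card = ∑ D ∈ ksF f g K (s + t), (ksF f g D t).card := by
  rw [← Finset.card_sigma, ← Finset.card_sigma]
  refine Finset.card_nbij' (fun x => ⟨x.1 ∪ x.2, x.2⟩) (fun x => ⟨x.1 \ x.2, x.2⟩) ?_ ?_ ?_ ?_
  · rintro ⟨A, C⟩ h
    simp only [coe_sigma, Set.mem_sigma_iff, mem_coe, ks_mem_F] at h ⊢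
    obtain ⟨⟨a1, a2, a3⟩, b1, b2, b3⟩ := h
    have hd : Disjoint A C := (Finset.disjoint_of_subset_left b1 sdiff_disjoint).symm
    refine ⟨⟨union_subset a1 (b1.trans sdiff_subset), ?_, ks_zs_union f g hd a3 b3⟩,
      subset_union_right, b2, b3⟩
    rw [card_union_of_disjoint hd, a2, b2]
  · rintro ⟨D, C⟩ h
    simp only [coe_sigma, Set.mem_sigma_iff, mem_coe, ks_mem_F] at h ⊢
    obtain ⟨⟨a1, a2, a3⟩, b1, b2, b3⟩ := h
    refine ⟨⟨sdiff_subset.trans a1, ?_, ks_zs_sdiff f g b1 b3 a3⟩, ?_, b2, b3⟩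
    · rw [card_sdiff_of_subset b1]; omega
    · intro x hx
      simp [b1.trans a1 hx, hx]
  · rintro ⟨A, C⟩ h
    simp only [coe_sigma, Set.mem_sigma_iff, mem_coe, ks_mem_F] at h
    obtain ⟨⟨a1, a2, a3⟩, b1, b2, b3⟩ := h
    have hd : Disjoint A C := (Finset.disjoint_of_subset_left b1 sdiff_disjoint).symm
    simp only [union_sdiff_cancel_right hd]
  · rintro ⟨D, C⟩ h
    simp only [coe_sigma, Set.mem_sigma_iff, mem_coe, ks_mem_F] at h
    obtain ⟨⟨a1, a2, a3⟩, b1, b2, b3⟩ := h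
    simp only [sdiff_union_of_subset b1]

lemma ks_choose (N q : ℕ) (h1 : q * p ≤ N) (h2 : N < (q + 1) * p) :
    ((N.choose p : ℕ) : ZMod p) = q := by
  have hp : 2 ≤ p := (Fact.out : p.Prime).two_le
  have := Choose.choose_modEq_choose_mod_mul_choose_div_nat (n := N) (k := p) (p := p)
  rw [Nat.mod_self, Nat.div_self (by omega), Nat.choose_zero_right, one_mul, Nat.choose_one_right]
    at this
  have hq : N / p = q := by
    rw [Nat.div_eq_iff (by omega)]
    constructor
    · linarith
    · have : (q + 1) * p = q * p + p := by ring
      omega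
  rw [hq] at this
  exact (ZMod.natCast_eq_natCast_iff _ _ _).2 this

/-- Reiher's theorem for odd primes -/
lemma ks_kemnitz_odd (hodd : Odd p) (K : Finset ℕ) (hK : K.card = 4 * p - 3) :
    ∃ I ⊆ K, I.card = p ∧ KsZs f g I := by
  have hp2 : 2 ≤ p := (Fact.out : p.Prime).two_le
  have hp : 3 ≤ p := by
    rcases hodd with ⟨k, hk⟩; omega
  by_contra hcon
  push Not at hcon
  have hZp : ∀ J ⊆ K, (ksF f g J p).card = 0 := by
    intro J hJ
    rw [Finset.card_eq_zero, Finset.eq_empty_iff_forall_notMem]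
    intro I hI
    obtain ⟨a, b, c⟩ := ks_mem_F.1 hI
    exact hcon I (a.trans hJ) b c
  have hZ2 : ∀ J ⊆ K, 3 * p - 2 ≤ J.card → J.card < 3 * p →
      ((ksF f g J (2 * p)).card : ZMod p) = -1 := by
    intro J hJ h1 h2
    have e1 := ks_sum0 f g hodd J (by omega)
    rw [ks_L1' f g J h1, hZp J hJ, ks_F_empty h2] at e1
    push_cast at e1
    linear_combination -e1
  have hZ3 : (ksF f g K (3 * p)).card = 0 := by
    rw [Finset.card_eq_zero, Finset.eq_empty_iff_forall_notMem]
    intro D hD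
    obtain ⟨a, b, c⟩ := ks_mem_F.1 hD
    obtain ⟨D', hD', hc⟩ := Finset.exists_subset_card_eq (s := D) (n := 3 * p - 1) (by omega)
    have e := hZ2 D' (hD'.trans a) (by omega) (by omega)
    have hne : (ksF f g D' (2 * p)).Nonempty := by
      rw [Finset.nonempty_iff_ne_empty]
      intro h
      rw [h] at e
      simp at e
    obtain ⟨C, hC⟩ := hne
    obtain ⟨a', b', c'⟩ := ks_mem_F.1 hC
    refine hcon (D \ C) (sdiff_subset.trans a) ?_ (ks_zs_sdiff f g (a'.trans hD') c' c)
    rw [card_sdiff_of_subset (a'.trans hD')]; omega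
  -- (a)
  have ea : ((ksF f g K (2 * p)).card : ZMod p) = -1 := by
    have e1 := ks_sum0 f g hodd K (by omega)
    rw [ks_L1' f g K (by omega), hZp K le_rfl, hZ3] at e1
    push_cast at e1
    linear_combination -e1
  -- (b)
  have eb : ((ksF f g K (p - 1)).card : ZMod p) - (ksF f g K (2 * p - 1)).card
       + (ksF f g K (3 * p - 1)).card = 0 := by
    have e1 := ks_L2' f g K (by omega)
    rw [ks_L1' f g K (by omega), ks_sum1 f g hodd K (by omega)] at e1
    linear_combination -e1
  -- averaging
  have ec : (3 : ZMod p) - 2 * (ksF f g K (p - 1)).card + (ksF f g K (2 * p - 1)).card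
      + (ksF f g K (2 * p)).card = 0 := by
    have h0 : ∀ J ∈ K.powersetCard (3 * p - 3),
        ((ksF f g J 0).card : ZMod p) + (ksF f g J (2 * p)).card
        - (ksF f g J (p - 1)).card + (ksF f g J (2 * p - 1)).card = 0 := by
      intro J hJ
      obtain ⟨h1, h2⟩ := mem_powersetCard.1 hJ
      have e1 := ks_L2' f g J (by omega)
      rw [ks_sum0 f g hodd J (by omega), ks_sum1 f g hodd J (by omega), hZp J h1,
        ks_F_empty (s := 3 * p) (by omega), ks_F_empty (s := 3 * p - 1) (by omega)] at e1
      rw [ks_F_zero]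
      push_cast at e1 ⊢
      linear_combination e1
    have h1 := Finset.sum_eq_zero h0
    rw [Finset.sum_add_distrib, Finset.sum_sub_distrib, Finset.sum_add_distrib] at h1
    simp only [← Nat.cast_sum] at h1
    rw [ks_avg f g K _ _ (by omega), ks_avg f g K _ _ (by omega), ks_avg f g K _ _ (by omega),
      ks_avg f g K _ _ (by omega), hK, ks_F_zero] at h1
    have c0 := ks_choose (p := p) (4 * p - 3) 3 (by omega) (by omega)
    have c1 := ks_choose (p := p) (4 * p - 3 - (p - 1)) 2 (by omega) (by omega)
    have c2 := ks_choose (p := p) (4 * p - 3 - (2 * p - 1)) 1 (by omega) (by omega)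
    have c3 := ks_choose (p := p) (4 * p - 3 - 2 * p) 1 (by omega) (by omega)
    rw [← Nat.choose_symm_of_eq_add (show 4 * p - 3 = (3 * p - 3) + p by omega)] at c0
    rw [← Nat.choose_symm_of_eq_add
      (show 4 * p - 3 - (p - 1) = (3 * p - 3 - (p - 1)) + p by omega)] at c1
    rw [← Nat.choose_symm_of_eq_add
      (show 4 * p - 3 - (2 * p - 1) = (3 * p - 3 - (2 * p - 1)) + p by omega)] at c2
    rw [← Nat.choose_symm_of_eq_add
      (show 4 * p - 3 - 2 * p = (3 * p - 3 - 2 * p) + p by omega)] at c3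
    simp only [Nat.sub_zero] at h1
    push_cast at h1 c0 c1 c2 c3
    rw [c0, c1, c2, c3] at h1
    linear_combination h1
  -- double counting
  have ed : ((ksF f g K (p - 1)).card : ZMod p) = (ksF f g K (3 * p - 1)).card := by
    have h := congrArg (Nat.cast : ℕ → ZMod p) (ks_double f g K (p - 1) (2 * p))
    rw [Nat.cast_sum, Nat.cast_sum, show p - 1 + 2 * p = 3 * p - 1 by omega,
      Finset.sum_congr rfl (g := fun _ => (-1 : ZMod p)),
      Finset.sum_congr (s₁ := ksF f g K (3 * p - 1)) rfl (g := fun _ => (-1 : ZMod p))] at h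
    · simpa using h
    · intro D hD
      obtain ⟨a, b, c⟩ := ks_mem_F.1 hD
      exact hZ2 D a (by omega) (by omega)
    · intro A hA
      obtain ⟨a, b, c⟩ := ks_mem_F.1 hA
      have : (K \ A).card = 3 * p - 2 := by rw [card_sdiff_of_subset a]; omega
      exact hZ2 _ sdiff_subset (by omega) (by omega)
  have h2 : ((2 : ℕ) : ZMod p) = 0 := by
    push_cast
    linear_combination ec - ea + eb + ed
  rw [CharP.cast_eq_zero_iff (ZMod p) p] at h2
  have := Nat.le_of_dvd (by norm_num) h2
  omega

lemma ks_kemnitz (K : Finset ℕ) (hK : 4 * p - 3 ≤ K.card) :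
    ∃ I ⊆ K, I.card = p ∧ KsZs f g I := by
  obtain ⟨K', hK', hc⟩ := Finset.exists_subset_card_eq hK
  suffices h : ∃ I ⊆ K', I.card = p ∧ KsZs f g I by
    obtain ⟨I, h1, h2⟩ := h
    exact ⟨I, h1.trans hK', h2⟩
  rcases (Fact.out : p.Prime).eq_two_or_odd' with rfl | hodd
  · obtain ⟨x, hx, y, hy, hxy, he⟩ := Finset.exists_ne_map_eq_of_card_lt_of_maps_to
      (s := K') (t := (univ : Finset (ZMod 2 × ZMod 2))) (f := fun i => (f i, g i))
      (by rw [hc]; decide) (by intro i _; simp)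
    simp only [Prod.mk.injEq] at he
    refine ⟨{x, y}, ?_, card_pair hxy, ?_, ?_⟩
    · intro z hz; simp at hz; rcases hz with rfl | rfl <;> assumption
    · rw [sum_pair hxy, he.1]; exact CharTwo.add_self_eq_zero _
    · rw [sum_pair hxy, he.2]; exact CharTwo.add_self_eq_zero _
  · exact ks_kemnitz_odd f g hodd K' hc

end

/-- the auxiliary monoid: integer-level semidirect product, with a weight -/
@[ext] structure KsM (r : ℕ) where
  a : ℤ
  b : ℕ
  w : ℕ

namespace KsM
variable {r : ℕ}

instance : One (KsM r) := ⟨⟨0, 0, 0⟩⟩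
instance : Mul (KsM r) := ⟨fun x y => ⟨x.a + (r : ℤ) ^ x.b * y.a, x.b + y.b, x.w + y.w⟩⟩

lemma one_a : (1 : KsM r).a = 0 := rfl
lemma one_b : (1 : KsM r).b = 0 := rfl
lemma one_w : (1 : KsM r).w = 0 := rfl
lemma mul_a (x y : KsM r) : (x * y).a = x.a + (r : ℤ) ^ x.b * y.a := rfl
lemma mul_b (x y : KsM r) : (x * y).b = x.b + y.b := rfl
lemma mul_w (x y : KsM r) : (x * y).w = x.w + y.w := rfl

instance : Monoid (KsM r) where
  mul_assoc x y z := by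
    ext
    · simp only [mul_a, mul_b]; ring
    · simp only [mul_b]; ring
    · simp only [mul_w]; ring
  one_mul x := by ext <;> simp [mul_a, mul_b, mul_w, one_a, one_b, one_w]
  mul_one x := by ext <;> simp [mul_a, mul_b, mul_w, one_a, one_b, one_w]

/-- scaling homomorphism -/
def scale (r p q : ℕ) : KsM (r ^ q) →* KsM r where
  toFun x := ⟨p * x.a, q * x.b, p * x.w⟩
  map_one' := by ext <;> simp [one_a, one_b, one_w]
  map_mul' x y := by
    ext
    · simp only [mul_a]; push_cast; rw [← pow_mul]; ring
    · simp only [mul_b]; ring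
    · simp only [mul_w]; ring

lemma prod_a {p : ℕ} (h : (r : ZMod p) = 1) (T : List (KsM r)) :
    ((T.prod.a : ℤ) : ZMod p) = (T.map (fun x => ((x.a : ℤ) : ZMod p))).sum := by
  induction T with
  | nil => simp [one_a]
  | cons x T ih => simp [mul_a, ih, h]

lemma prod_b {p : ℕ} (T : List (KsM r)) :
    ((T.prod.b : ℕ) : ZMod p) = (T.map (fun x => ((x.b : ℕ) : ZMod p))).sum := by
  induction T with
  | nil => simp [one_b]
  | cons x T ih => simp [mul_b, ih]

lemma prod_w' {p : ℕ} (T : List (KsM r)) :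
    ((T.prod.w : ℕ) : ZMod p) = (T.map (fun x => ((x.w : ℕ) : ZMod p))).sum := by
  induction T with
  | nil => simp [one_w]
  | cons x T ih => simp [mul_w, ih]

lemma prod_w (T : List (KsM r)) (h : ∀ x ∈ T, x.w = 1) : T.prod.w = T.length := by
  induction T with
  | nil => simp [one_w]
  | cons x T ih =>
    have h1 := h x (by simp)
    have h2 := ih (fun y hy => h y (by simp [hy]))
    simp [mul_w, h1, h2]; omega

end KsM

lemma ks_select {α : Type*} (d : α) (S : List α) (I : Finset ℕ) (hI : I ⊆ range S.length) :
    (I.toList.map (fun i => S.getD i d)).Subperm S := by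
  have h1 : (List.range S.length).map (fun i => S.getD i d) = S := by
    apply List.ext_getElem
    · simp
    · intro i h1 h2
      simp at h1
      simp [h1]
  conv_rhs => rw [← h1]
  have h2 : I.toList.Subperm (List.range S.length) := by
    apply List.subperm_of_subset (Finset.nodup_toList I)
    intro i hi
    have := hI (Finset.mem_toList.1 hi)
    simpa using this
  obtain ⟨l, h3, h4⟩ := h2
  exact ⟨l.map _, h3.map _, h4.map _⟩

lemma ks_perm_map {α β : Type*} (f : α → β) : ∀ {l : List β} {m : List β}, l.Perm m →
    ∀ L : List α, m = L.map f → ∃ L' : List α, L'.Perm L ∧ l = L'.map f := by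
  intro l m h
  induction h with
  | nil => intro L hL; exact ⟨L, List.Perm.refl _, hL⟩
  | cons x h ih =>
    intro L hL
    obtain ⟨a, L1, rfl, rfl, hL1⟩ := List.map_eq_cons_iff.1 hL.symm
    obtain ⟨L', h1, h2⟩ := ih L1 hL1.symm
    exact ⟨a :: L', h1.cons a, by simp [h2]⟩
  | swap x y l =>
    intro L hL
    obtain ⟨a, L1, rfl, rfl, hL1⟩ := List.map_eq_cons_iff.1 hL.symm
    obtain ⟨b, L2, rfl, rfl, rfl⟩ := List.map_eq_cons_iff.1 hL1
    exact ⟨b :: a :: L2, List.Perm.swap _ _ _, by simp⟩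
  | trans _ _ ih1 ih2 =>
    intro L hL
    obtain ⟨L1, h1, h2⟩ := ih2 L hL
    obtain ⟨L2, h3, h4⟩ := ih1 L1 h2
    exact ⟨L2, h3.trans h1, h4⟩

lemma ks_subperm_map {α β : Type*} (f : α → β) (L : List α) (T : List β)
    (h : T.Subperm (L.map f)) : ∃ L' : List α, L'.Subperm L ∧ T = L'.map f := by
  obtain ⟨l, h1, h2⟩ := h
  obtain ⟨L0, h3, rfl⟩ := List.sublist_map_iff.1 h2
  obtain ⟨L', h4, h5⟩ := ks_perm_map f h1.symm L0 rfl
  exact ⟨L', ⟨L0, h4.symm, h3⟩, h5⟩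

lemma ks_blocks {M M' : Type*} [Monoid M] [Monoid M'] (e : M' →* M) (y : List M → M')
    (L : List (List M)) (hL : ∀ B ∈ L, B.prod = e (y B)) (S : List M) (hS : L.flatten.Subperm S)
    (T' : List M') (hT : T'.Subperm (L.map y)) :
    ∃ L' : List (List M), L'.Subperm L ∧ T' = L'.map y ∧ L'.flatten.Subperm S ∧
      L'.flatten.prod = e T'.prod := by
  obtain ⟨L', h1, rfl⟩ := ks_subperm_map y L T' hT
  refine ⟨L', h1, rfl, ?_, ?_⟩
  · obtain ⟨l, h2, h3⟩ := h1
    exact (h2.flatten.symm.subperm.trans h3.flatten.subperm).trans hS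
  · rw [List.prod_flatten, map_list_prod, List.map_map]
    congr 1
    apply List.map_congr_left
    intro B hB
    exact hL B (h1.subset hB)

lemma ks_compl {α : Type*} {B S : List α} (h : B.Subperm S) : ∃ R, (B ++ R).Perm S := by
  obtain ⟨l, h1, h2⟩ := h
  obtain ⟨R, h3⟩ := h2.exists_perm_append
  exact ⟨R, (h1.symm.append_right R).trans h3.symm⟩

lemma ks_extract {α : Type*} (P : List α → Prop) (Q : α → Prop) (p N0 R : ℕ)
    (hblk : ∀ S : List α, (∀ x ∈ S, Q x) → N0 ≤ S.length →
      ∃ B : List α, B.Subperm S ∧ B.length = p ∧ P B) (hR : N0 ≤ p + R) :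
    ∀ (k : ℕ) (S : List α), (∀ x ∈ S, Q x) → k * p + R ≤ S.length →
      ∃ (L : List (List α)) (S' : List α), L.length = k ∧ (∀ B ∈ L, B.length = p ∧ P B) ∧
        (L.flatten ++ S').Perm S ∧ R ≤ S'.length := by
  intro k
  induction k with
  | zero =>
    intro S hS hl
    exact ⟨[], S, rfl, by simp, by simp, by simpa using hl⟩
  | succ k ih =>
    intro S hS hl
    have hl' : k * p + p + R ≤ S.length := by rw [← Nat.succ_mul]; exact hl
    obtain ⟨B, h1, h2, h3⟩ := hblk S hS (by omega)
    obtain ⟨S1, hS1⟩ := ks_compl h1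
    have hlen := hS1.length_eq
    rw [List.length_append] at hlen
    obtain ⟨L, S', a1, a2, a3, a4⟩ := ih S1
      (fun x hx => hS x (hS1.subset (by simp [hx]))) (by omega)
    refine ⟨B :: L, S', by simp [a1], ?_, ?_, a4⟩
    · intro C hC
      rcases List.mem_cons.1 hC with rfl | hC
      · exact ⟨h2, h3⟩
      · exact a2 C hC
    · rw [List.flatten_cons, List.append_assoc]
      exact (a3.append_left B).trans hS1

section
variable {r : ℕ}

lemma ks_toList_sum {A : Type*} [AddCommMonoid A] {α : Type*} (S : List α) (d : α) (I : Finset ℕ)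
    (h : α → A) :
    ((I.toList.map (fun i => S.getD i d)).map h).sum = ∑ i ∈ I, h (S.getD i d) := by
  rw [List.map_map, ← Finset.sum_map_toList]; rfl

lemma ks_list_kemnitz {p : ℕ} [Fact p.Prime] (hr : (r : ZMod p) = 1) (S : List (KsM r))
    (hS : 4 * p - 3 ≤ S.length) :
    ∃ B : List (KsM r), B.Subperm S ∧ B.length = p ∧ ((p : ℤ) ∣ B.prod.a ∧ p ∣ B.prod.b) := by
  obtain ⟨I, h1, h2, h3⟩ := ks_kemnitz (p := p) (fun i => (((S.getD i 1).a : ℤ) : ZMod p))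
    (fun i => (((S.getD i 1).b : ℕ) : ZMod p)) (range S.length) (by simpa using hS)
  refine ⟨I.toList.map (fun i => S.getD i 1), ks_select _ S I h1, by simp [h2], ?_, ?_⟩
  · rw [← ZMod.intCast_zmod_eq_zero_iff_dvd, KsM.prod_a hr, ks_toList_sum]
    exact h3.1
  · rw [← CharP.cast_eq_zero_iff (ZMod p) p, KsM.prod_b, ks_toList_sum]
    exact h3.2

lemma ks_list_egz {n : ℕ} (hr : (r : ZMod n) = 1) (S : List (KsM r))
    (hS : 2 * n - 1 ≤ S.length) :
    ∃ B : List (KsM r), B.Subperm S ∧ B.length = n ∧ (n : ℤ) ∣ B.prod.a := by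
  obtain ⟨I, h1, h2, h3⟩ := ZMod.erdos_ginzburg_ziv (n := n) (s := range S.length)
    (fun i => (((S.getD i 1).a : ℤ) : ZMod n)) (by simpa using hS)
  refine ⟨I.toList.map (fun i => S.getD i 1), ks_select _ S I h1, by simp [h2], ?_⟩
  rw [← ZMod.intCast_zmod_eq_zero_iff_dvd, KsM.prod_a hr, ks_toList_sum]
  exact h3

lemma ks_list_dav3 {p : ℕ} [Fact p.Prime] (hr : (r : ZMod p) = 1) (S : List (KsM r))
    (hS : 3 * p - 2 ≤ S.length) :
    ∃ B : List (KsM r), B.Subperm S ∧ B ≠ [] ∧ (p : ℤ) ∣ B.prod.a ∧ p ∣ B.prod.b ∧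
      p ∣ B.prod.w := by
  have hp : 2 ≤ p := (Fact.out : p.Prime).two_le
  obtain ⟨I, h1, h2, h3⟩ := ks_davenport (p := p) (range S.length)
    (fun i => ![(((S.getD i 1).a : ℤ) : ZMod p), (((S.getD i 1).b : ℕ) : ZMod p),
      (((S.getD i 1).w : ℕ) : ZMod p)]) (by simp; omega)
  refine ⟨I.toList.map (fun i => S.getD i 1), ks_select _ S I h1, ?_, ?_, ?_, ?_⟩
  · simpa using h2.ne_empty
  · rw [← ZMod.intCast_zmod_eq_zero_iff_dvd, KsM.prod_a hr, ks_toList_sum]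
    exact h3 0
  · rw [← CharP.cast_eq_zero_iff (ZMod p) p, KsM.prod_b, ks_toList_sum]
    exact h3 1
  · rw [← CharP.cast_eq_zero_iff (ZMod p) p, KsM.prod_w', ks_toList_sum]
    exact h3 2

lemma ks_list_dav2 {p : ℕ} [Fact p.Prime] (hr : (r : ZMod p) = 1) (S : List (KsM r))
    (hS : 2 * p - 1 ≤ S.length) :
    ∃ B : List (KsM r), B.Subperm S ∧ B ≠ [] ∧ (p : ℤ) ∣ B.prod.a ∧ p ∣ B.prod.w := by
  have hp : 2 ≤ p := (Fact.out : p.Prime).two_le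
  obtain ⟨I, h1, h2, h3⟩ := ks_davenport (p := p) (range S.length)
    (fun i => ![(((S.getD i 1).a : ℤ) : ZMod p),
      (((S.getD i 1).w : ℕ) : ZMod p)]) (by simp; omega)
  refine ⟨I.toList.map (fun i => S.getD i 1), ks_select _ S I h1, ?_, ?_, ?_⟩
  · simpa using h2.ne_empty
  · rw [← ZMod.intCast_zmod_eq_zero_iff_dvd, KsM.prod_a hr, ks_toList_sum]
    exact h3 0
  · rw [← CharP.cast_eq_zero_iff (ZMod p) p, KsM.prod_w', ks_toList_sum]
    exact h3 1

end

lemma ks_r_one {m r : ℕ} (hm : m ≠ 1) (hm0 : 0 < m) (h : (r : ZMod m.minFac) ^ m = 1) :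
    (r : ZMod m.minFac) = 1 := by
  have hp := Nat.minFac_prime hm
  haveI : Fact m.minFac.Prime := ⟨hp⟩
  have hne : (r : ZMod m.minFac) ≠ 0 := by
    intro h0
    rw [h0, zero_pow hm0.ne'] at h
    exact zero_ne_one h
  have h2 := ZMod.pow_card_sub_one_eq_one hne
  have hco : Nat.gcd m (m.minFac - 1) = 1 := by
    by_contra hg
    obtain ⟨q, hq, hqd⟩ := Nat.exists_prime_and_dvd hg
    have h3 := Nat.minFac_le_of_dvd hq.two_le (hqd.trans (Nat.gcd_dvd_left _ _))
    have h4 := Nat.le_of_dvd (by have := hp.two_le; omega) (hqd.trans (Nat.gcd_dvd_right _ _))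
    have := hp.two_le
    omega
  have := pow_gcd_eq_one.2 ⟨h, h2⟩
  rwa [hco, pow_one] at this

lemma ks_zmod_of_dvd {a b r k : ℕ} (h : a ∣ b) (hr : (r : ZMod b) ^ k = 1) :
    (r : ZMod a) ^ k = 1 := by
  have := congrArg (ZMod.castHom h (ZMod a)) hr
  rwa [map_pow, map_natCast, map_one] at this

lemma ks_split {m n r : ℕ} (hm : m ≠ 1) (hm0 : 0 < m) (h : (r : ZMod (m * n)) ^ m = 1) :
    ∃ p m' : ℕ, p.Prime ∧ m = p * m' ∧ 0 < m' ∧ m' < m ∧ (r : ZMod p) = 1 ∧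
      ((r ^ p : ℕ) : ZMod (m' * n)) ^ m' = 1 := by
  obtain ⟨m', hm'⟩ := Nat.minFac_dvd m
  have hp := Nat.minFac_prime hm
  have hm'0 : 0 < m' := by
    rcases Nat.eq_zero_or_pos m' with h0 | h0
    · rw [h0] at hm'; omega
    · exact h0
  refine ⟨m.minFac, m', hp, hm', hm'0, ?_, ?_, ?_⟩
  · calc m' < m.minFac * m' := by nlinarith [hp.two_le]
      _ = m := hm'.symm
  · exact ks_r_one hm hm0
      (ks_zmod_of_dvd ((Nat.minFac_dvd m).trans (Dvd.intro _ rfl)) h)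
  · push_cast
    rw [← pow_mul, ← hm']
    refine ks_zmod_of_dvd (Nat.mul_dvd_mul ?_ dvd_rfl) h
    exact Dvd.intro_left _ hm'.symm

/-- divide a block product -/
def ksDiv (r p q : ℕ) (B : List (KsM r)) : KsM (r ^ q) :=
  ⟨B.prod.a / p, B.prod.b / q, B.prod.w / p⟩

lemma ks_div {r p q : ℕ} (B : List (KsM r)) (ha : (p : ℤ) ∣ B.prod.a) (hb : q ∣ B.prod.b)
    (hw : p ∣ B.prod.w) : B.prod = KsM.scale r p q (ksDiv r p q B) := by
  ext
  · exact (Int.mul_ediv_cancel' ha).symm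
  · exact (Nat.mul_div_cancel' hb).symm
  · exact (Nat.mul_div_cancel' hw).symm

lemma ks_claimK : ∀ m : ℕ, 0 < m → ∀ n r : ℕ, 0 < n → (r : ZMod (m * n)) ^ m = 1 →
    ∀ S : List (KsM r), (∀ x ∈ S, x.w = 1) → 2 * (m * n) + 2 * m ≤ S.length + 3 →
    ∃ T : List (KsM r), T.Subperm S ∧ T.length = m * n ∧
      (((m * n : ℕ) : ℤ) ∣ T.prod.a ∧ m ∣ T.prod.b ∧ T.prod.w = m * n) := by
  intro m
  induction m using Nat.strong_induction_on with
  | _ m ih =>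
  intro hm n r hn hr S hS hlen
  by_cases hm1 : m = 1
  · subst hm1
    rw [one_mul, pow_one] at hr
    obtain ⟨B, h1, h2, h3⟩ := ks_list_egz hr S (by omega)
    refine ⟨B, h1, by simpa using h2, by simpa using h3, one_dvd _, ?_⟩
    rw [KsM.prod_w B (fun x hx => hS x (h1.subset hx)), h2, one_mul]
  · obtain ⟨p, m', hp, rfl, hm'0, hlt, hrp, hr'⟩ := ks_split hm1 hm hr
    haveI : Fact p.Prime := ⟨hp⟩
    have hp2 := hp.two_le
    have hmn : 0 < m' * n := Nat.mul_pos hm'0 hn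
    obtain ⟨L, S', a1, a2, a3, a4⟩ := ks_extract
      (fun B : List (KsM r) => (p : ℤ) ∣ B.prod.a ∧ p ∣ B.prod.b) (fun x => x.w = 1)
      p (4 * p - 3) (3 * p - 3) (fun S _ hl => ks_list_kemnitz hrp S hl) (by omega)
      (2 * (m' * n) + 2 * m' - 3) S hS (by
        obtain ⟨k, hk⟩ : ∃ k, 2 * (m' * n) + 2 * m' = k + 3 := ⟨2 * (m' * n) + 2 * m' - 3, by omega⟩
        have e : 2 * (m' * n) + 2 * m' - 3 = k := by omega
        rw [e]
        have : 2 * (p * m' * n) + 2 * (p * m') = k * p + 3 * p := by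
          calc _ = p * (2 * (m' * n) + 2 * m') := by ring
            _ = _ := by rw [hk]; ring
        omega)
    have hsub : L.flatten.Subperm S :=
      (List.sublist_append_left _ _).subperm.trans a3.subperm
    have hw : ∀ B ∈ L, B.prod.w = p := by
      intro B hB
      rw [KsM.prod_w B, (a2 B hB).1]
      intro x hx
      exact hS x (hsub.subset (List.mem_flatten.2 ⟨B, hB, hx⟩))
    have hdiv : ∀ B ∈ L, B.prod = KsM.scale r p p (ksDiv r p p B) := by
      intro B hB
      exact ks_div B (a2 B hB).2.1 (a2 B hB).2.2 (by rw [hw B hB])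
    obtain ⟨T', t1, t2, t3, t4, t5⟩ := ih m' hlt hm'0 n (r ^ p) hn hr' (L.map (ksDiv r p p))
      (by
        intro x hx
        obtain ⟨B, hB, rfl⟩ := List.mem_map.1 hx
        change B.prod.w / p = 1
        rw [hw B hB]; exact Nat.div_self (by omega))
      (by rw [List.length_map, a1]; omega)
    obtain ⟨L', l1, l2, l3, l4⟩ := ks_blocks (KsM.scale r p p) (ksDiv r p p) L hdiv S hsub T' t1
    have hW : L'.flatten.prod.w = p * m' * n := by
      rw [l4]
      change p * T'.prod.w = _
      rw [t5]; ring
    refine ⟨L'.flatten, l3, ?_, ?_, ?_, hW⟩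
    · rw [← hW, KsM.prod_w]
      exact fun x hx => hS x (l3.subset hx)
    · rw [l4]
      change _ ∣ (p : ℤ) * T'.prod.a
      rw [mul_assoc, Nat.cast_mul]
      exact mul_dvd_mul_left _ t3
    · rw [l4]
      change _ ∣ p * T'.prod.b
      exact Nat.mul_dvd_mul_left _ t4

/-- one-exceptional-weight statement, cyclic base case -/
lemma ks_claimA_base : ∀ n : ℕ, 0 < n → ∀ r : ℕ, (r : ZMod n) = 1 →
    ∀ (x : KsM r) (S : List (KsM r)), (∀ x ∈ S, x.w = 1) → 2 * n ≤ S.length + 2 →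
    ∃ T : List (KsM r), T.Subperm (x :: S) ∧ T ≠ [] ∧
      (n : ℤ) ∣ T.prod.a ∧ n ∣ T.prod.w := by
  intro n
  induction n using Nat.strong_induction_on with
  | _ n ih =>
  intro hn r hr x S hS hlen
  by_cases hn1 : n = 1
  · subst hn1
    exact ⟨[x], (List.cons_sublist_cons.2 (List.nil_sublist S)).subperm, by simp, by simp, by simp⟩
  · obtain ⟨n', hn'⟩ := Nat.minFac_dvd n
    have hp := Nat.minFac_prime hn1
    generalize n.minFac = p at hn' hp
    subst hn'
    haveI : Fact p.Prime := ⟨hp⟩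
    have hp2 := hp.two_le
    have hn'0 : 0 < n' := Nat.pos_of_mul_pos_left hn
    have hlt : n' < p * n' := by nlinarith
    have hrp : (r : ZMod p) = 1 := by
      have := ks_zmod_of_dvd (k := 1) (Dvd.intro n' rfl : p ∣ p * n') (by rw [pow_one]; exact hr)
      rwa [pow_one] at this
    have hrn : ((r ^ 1 : ℕ) : ZMod n') = 1 := by
      have := ks_zmod_of_dvd (k := 1) (Dvd.intro_left p rfl : n' ∣ p * n')
        (by rw [pow_one]; exact hr)
      rwa [pow_one] at this ⊢
    obtain ⟨L, S', a1, a2, a3, a4⟩ := ks_extract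
      (fun B : List (KsM r) => (p : ℤ) ∣ B.prod.a) (fun x => x.w = 1)
      p (2 * p - 1) (2 * p - 2) (fun S _ hl => ks_list_egz hrp S hl) (by omega)
      (2 * n' - 2) S hS (by
        obtain ⟨k, rfl⟩ : ∃ k, n' = k + 1 := ⟨n' - 1, by omega⟩
        have e : 2 * (k + 1) - 2 = 2 * k := by omega
        rw [e]
        have : 2 * (p * (k + 1)) = 2 * k * p + 2 * p := by ring
        omega)
    obtain ⟨C, c1, c2, c3, c4⟩ := ks_list_dav2 hrp (x :: S') (by simp; omega)
    have hsub : L.flatten.Subperm S :=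
      (List.sublist_append_left _ _).subperm.trans a3.subperm
    have hsub2 : (C :: L).flatten.Subperm (x :: S) := by
      rw [List.flatten_cons]
      refine (List.Subperm.append c1 (List.Subperm.refl L.flatten)).trans ?_
      exact ((List.perm_append_comm.trans a3).cons x).subperm
    have hw : ∀ B ∈ L, B.prod.w = p := by
      intro B hB
      rw [KsM.prod_w B, (a2 B hB).1]
      intro x hx
      exact hS x (hsub.subset (List.mem_flatten.2 ⟨B, hB, hx⟩))
    have hdiv : ∀ B ∈ C :: L, B.prod = KsM.scale r p 1 (ksDiv r p 1 B) := by
      intro B hB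
      rcases List.mem_cons.1 hB with rfl | hB
      · exact ks_div B c3 (one_dvd _) c4
      · exact ks_div B (a2 B hB).2 (one_dvd _) (by rw [hw B hB])
    have hne : ∀ B ∈ C :: L, B ≠ [] := by
      intro B hB
      rcases List.mem_cons.1 hB with rfl | hB
      · exact c2
      · rw [← List.length_pos_iff, (a2 B hB).1]; omega
    obtain ⟨T', t1, t2, t3, t4⟩ := ih n' hlt hn'0 (r ^ 1) hrn (ksDiv r p 1 C) (L.map (ksDiv r p 1))
      (by
        intro x hx
        obtain ⟨B, hB, rfl⟩ := List.mem_map.1 hx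
        change B.prod.w / p = 1
        rw [hw B hB]; exact Nat.div_self (by omega))
      (by rw [List.length_map, a1]; omega)
    obtain ⟨L', l1, l2, l3, l4⟩ := ks_blocks (KsM.scale r p 1) (ksDiv r p 1) (C :: L) hdiv
      (x :: S) hsub2 T' t1
    refine ⟨L'.flatten, l3, ?_, ?_, ?_⟩
    · intro h
      rw [List.flatten_eq_nil_iff] at h
      obtain ⟨B, hB⟩ := List.exists_mem_of_ne_nil L' (by rintro rfl; exact t2 l2)
      exact hne B (l1.subset hB) (h B hB)
    · rw [l4]
      change _ ∣ (p : ℤ) * T'.prod.a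
      rw [Nat.cast_mul]
      exact mul_dvd_mul_left _ t3
    · rw [l4]
      change _ ∣ p * T'.prod.w
      exact Nat.mul_dvd_mul_left _ t4

lemma ks_claimA : ∀ m : ℕ, 0 < m → ∀ n r : ℕ, 0 < n → (r : ZMod (m * n)) ^ m = 1 →
    ∀ (x : KsM r) (S : List (KsM r)), (∀ x ∈ S, x.w = 1) → 2 * (m * n) + m ≤ S.length + 3 →
    ∃ T : List (KsM r), T.Subperm (x :: S) ∧ T ≠ [] ∧
      ((m * n : ℕ) : ℤ) ∣ T.prod.a ∧ m ∣ T.prod.b ∧ m * n ∣ T.prod.w := by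
  intro m
  induction m using Nat.strong_induction_on with
  | _ m ih =>
  intro hm n r hn hr x S hS hlen
  by_cases hm1 : m = 1
  · subst hm1
    rw [one_mul, pow_one] at hr
    obtain ⟨B, h1, h2, h3, h4⟩ := ks_claimA_base n hn r hr x S hS (by omega)
    exact ⟨B, h1, h2, by simpa using h3, one_dvd _, by simpa using h4⟩
  · obtain ⟨p, m', hp, rfl, hm'0, hlt, hrp, hr'⟩ := ks_split hm1 hm hr
    haveI : Fact p.Prime := ⟨hp⟩
    have hp2 := hp.two_le
    have hmn : 0 < m' * n := Nat.mul_pos hm'0 hn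
    obtain ⟨L, S', a1, a2, a3, a4⟩ := ks_extract
      (fun B : List (KsM r) => (p : ℤ) ∣ B.prod.a ∧ p ∣ B.prod.b) (fun x => x.w = 1)
      p (4 * p - 3) (3 * p - 3) (fun S _ hl => ks_list_kemnitz hrp S hl) (by omega)
      (2 * (m' * n) + m' - 3) S hS (by
        obtain ⟨k, hk⟩ : ∃ k, 2 * (m' * n) + m' = k + 3 := ⟨2 * (m' * n) + m' - 3, by omega⟩
        have e : 2 * (m' * n) + m' - 3 = k := by omega
        rw [e]
        have : 2 * (p * m' * n) + (p * m') = k * p + 3 * p := by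
          calc _ = p * (2 * (m' * n) + m') := by ring
            _ = _ := by rw [hk]; ring
        omega)
    obtain ⟨C, c1, c2, c3, c4, c5⟩ := ks_list_dav3 hrp (x :: S') (by simp; omega)
    have hsub : L.flatten.Subperm S :=
      (List.sublist_append_left _ _).subperm.trans a3.subperm
    have hsub2 : (C :: L).flatten.Subperm (x :: S) := by
      rw [List.flatten_cons]
      refine (List.Subperm.append c1 (List.Subperm.refl L.flatten)).trans ?_
      exact ((List.perm_append_comm.trans a3).cons x).subperm
    have hw : ∀ B ∈ L, B.prod.w = p := by
      intro B hB
      rw [KsM.prod_w B, (a2 B hB).1]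
      intro x hx
      exact hS x (hsub.subset (List.mem_flatten.2 ⟨B, hB, hx⟩))
    have hdiv : ∀ B ∈ C :: L, B.prod = KsM.scale r p p (ksDiv r p p B) := by
      intro B hB
      rcases List.mem_cons.1 hB with rfl | hB
      · exact ks_div B c3 c4 c5
      · exact ks_div B (a2 B hB).2.1 (a2 B hB).2.2 (by rw [hw B hB])
    have hne : ∀ B ∈ C :: L, B ≠ [] := by
      intro B hB
      rcases List.mem_cons.1 hB with rfl | hB
      · exact c2
      · rw [← List.length_pos_iff, (a2 B hB).1]; omega
    obtain ⟨T', t1, t2, t3, t4, t5⟩ := ih m' hlt hm'0 n (r ^ p) hn hr' (ksDiv r p p C)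
      (L.map (ksDiv r p p))
      (by
        intro x hx
        obtain ⟨B, hB, rfl⟩ := List.mem_map.1 hx
        change B.prod.w / p = 1
        rw [hw B hB]; exact Nat.div_self (by omega))
      (by rw [List.length_map, a1]; omega)
    obtain ⟨L', l1, l2, l3, l4⟩ := ks_blocks (KsM.scale r p p) (ksDiv r p p) (C :: L) hdiv
      (x :: S) hsub2 T' t1
    refine ⟨L'.flatten, l3, ?_, ?_, ?_, ?_⟩
    · intro h
      rw [List.flatten_eq_nil_iff] at h
      obtain ⟨B, hB⟩ := List.exists_mem_of_ne_nil L' (by rintro rfl; exact t2 l2)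
      exact hne B (l1.subset hB) (h B hB)
    · rw [l4]
      change _ ∣ (p : ℤ) * T'.prod.a
      rw [mul_assoc, Nat.cast_mul]
      exact mul_dvd_mul_left _ t3
    · rw [l4]
      change _ ∣ p * T'.prod.b
      exact Nat.mul_dvd_mul_left _ t4
    · rw [l4]
      change _ ∣ p * T'.prod.w
      rw [mul_assoc]
      exact Nat.mul_dvd_mul_left _ t5

/-- the trivial-product predicate is multiplicative -/
def KsOne {r : ℕ} (m n : ℕ) (x : KsM r) : Prop := ((m * n : ℕ) : ℤ) ∣ x.a ∧ m ∣ x.b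

lemma KsOne.mul {r m n : ℕ} {x y : KsM r} (hx : KsOne m n x) (hy : KsOne m n y) :
    KsOne m n (x * y) :=
  ⟨dvd_add hx.1 (hy.1.mul_left _), dvd_add hx.2 hy.2⟩

lemma KsOne.flatten {r m n : ℕ} (L : List (List (KsM r))) (h : ∀ B ∈ L, KsOne m n B.prod) :
    KsOne m n L.flatten.prod := by
  induction L with
  | nil => exact ⟨dvd_zero _, dvd_zero _⟩
  | cons B L ih =>
    rw [List.flatten_cons, List.prod_append]
    exact (h B (by simp)).mul (ih fun C hC => h C (by simp [hC]))

/-- length `mn` or `2mn` -/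
lemma ks_one_two {m n r : ℕ} (hm : 0 < m) (hn : 0 < n) (hr : (r : ZMod (m * n)) ^ m = 1)
    (S : List (KsM r)) (hS : ∀ x ∈ S, x.w = 1) (hlen : 2 * (m * n) + m ≤ S.length + 2) :
    ∃ T : List (KsM r), T.Subperm S ∧ KsOne m n T.prod ∧
      (T.length = m * n ∨ T.length = 2 * (m * n)) := by
  have hmn : m ≤ m * n := Nat.le_mul_of_pos_right m hn
  have h0 : 0 < m * n := Nat.mul_pos hm hn
  have htl : (S.take (2 * (m * n) + m - 2)).length = 2 * (m * n) + m - 2 := by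
    rw [List.length_take]; omega
  have hts : ∀ x ∈ S.take (2 * (m * n) + m - 2), x.w = 1 := fun x hx => hS x (List.mem_of_mem_take hx)
  have hsub : (S.take (2 * (m * n) + m - 2)).Subperm S := (List.take_sublist _ _).subperm
  generalize S.take (2 * (m * n) + m - 2) = S0 at htl hts hsub
  cases S0 with
  | nil => simp at htl; omega
  | cons x S1 =>
    obtain ⟨T, t1, t2, t3, t4, t5⟩ := ks_claimA m hm n r hn hr x S1
      (fun y hy => hts y (by simp [hy])) (by simp at htl; omega)
    refine ⟨T, t1.trans hsub, ⟨t3, t4⟩, ?_⟩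
    rw [KsM.prod_w T (fun y hy => hts y (t1.subset hy))] at t5
    have hl := t1.length_le
    have hpos : 0 < T.length := List.length_pos_iff.2 t2
    obtain ⟨k, hk⟩ := t5
    have hk3 : k < 3 := by
      by_contra hk3
      have : m * n * 3 ≤ m * n * k := Nat.mul_le_mul_left _ (by omega)
      omega
    interval_cases k <;> omega

lemma ks_two {m n r : ℕ} (hm : 0 < m) (hn : 0 < n) (hr : (r : ZMod (m * n)) ^ m = 1)
    (S : List (KsM r)) (hS : ∀ x ∈ S, x.w = 1) (hlen : 3 * (m * n) + m ≤ S.length + 2) :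
    ∃ T : List (KsM r), T.Subperm S ∧ KsOne m n T.prod ∧ T.length = 2 * (m * n) := by
  obtain ⟨T, t1, t2, t3 | t3⟩ := ks_one_two hm hn hr S hS (by omega)
  · obtain ⟨S', hS'⟩ := ks_compl t1
    have hl := hS'.length_eq
    rw [List.length_append] at hl
    obtain ⟨U, u1, u2, u3 | u3⟩ := ks_one_two hm hn hr S'
      (fun x hx => hS x (hS'.subset (by simp [hx]))) (by omega)
    · refine ⟨T ++ U, ?_, ?_, ?_⟩
      · exact (List.Subperm.append (List.Subperm.refl T) u1).trans hS'.subperm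
      · rw [List.prod_append]; exact t2.mul u2
      · rw [List.length_append]; omega
    · exact ⟨U, u1.trans ((List.sublist_append_right _ _).subperm.trans hS'.subperm), u2, u3⟩
  · exact ⟨T, t1, t2, t3⟩

lemma ks_flatten_length {α : Type*} (L : List (List α)) (p : ℕ) (h : ∀ B ∈ L, B.length = p) :
    L.flatten.length = L.length * p := by
  induction L with
  | nil => simp
  | cons B L ih =>
    rw [List.flatten_cons, List.length_append, h B (by simp), ih fun C hC => h C (by simp [hC]),
      List.length_cons]
    ring

lemma ks_exact {m n r : ℕ} (hm : 0 < m) (hn : 0 < n) (hr : (r : ZMod (m * n)) ^ m = 1)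
    (S : List (KsM r)) (hS : ∀ x ∈ S, x.w = 1) (hlen : m ^ 2 * n + m * n + m ≤ S.length + 2) :
    ∃ T : List (KsM r), T.Subperm S ∧ KsOne m n T.prod ∧ T.length = m ^ 2 * n := by
  by_cases hm1 : m = 1
  · subst hm1
    obtain ⟨T, t1, t2, t3, t4, t5⟩ := ks_claimK 1 hm n r hn hr S hS (by omega)
    exact ⟨T, t1, ⟨t3, t4⟩, by rw [t2]; ring⟩
  · have hmn : m ≤ m * n := Nat.le_mul_of_pos_right m hn
    obtain ⟨k, rfl⟩ : ∃ k, m = k + 2 := ⟨m - 2, by omega⟩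
    have e : (k + 2) ^ 2 * n = k * ((k + 2) * n) + 2 * ((k + 2) * n) := by ring
    obtain ⟨L, S', a1, a2, a3, a4⟩ := ks_extract
      (fun B : List (KsM r) => KsOne (k + 2) n B.prod) (fun x => x.w = 1)
      ((k + 2) * n) (2 * ((k + 2) * n) + 2 * (k + 2) - 3) (3 * ((k + 2) * n) + (k + 2) - 2)
      (fun S h hl => by
        obtain ⟨T, t1, t2, t3, t4, t5⟩ := ks_claimK (k + 2) hm n r hn hr S h (by omega)
        exact ⟨T, t1, t2, t3, t4⟩) (by omega) k S hS (by omega)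
    obtain ⟨U, u1, u2, u3⟩ := ks_two hm hn hr S'
      (fun x hx => hS x (a3.subset (by simp [hx]))) (by omega)
    refine ⟨L.flatten ++ U, ?_, ?_, ?_⟩
    · exact (List.Subperm.append (List.Subperm.refl _) u1).trans a3.subperm
    · rw [List.prod_append]; exact (KsOne.flatten L fun B hB => (a2 B hB).2).mul u2
    · rw [List.length_append, u3, ks_flatten_length L _ fun B hB => (a2 B hB).1, a1, e]

section
variable {m n : ℕ} (φ : Multiplicative (ZMod m) →* MulAut (Multiplicative (ZMod (m * n))))

/-- the integer exponent of the action of the generator -/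
def ksR : ℕ := (Multiplicative.toAdd (φ (Multiplicative.ofAdd 1) (Multiplicative.ofAdd 1))).val

lemma ks_act_one (hm : 0 < m) (hn : 0 < n) (a : ZMod (m * n)) :
    φ (Multiplicative.ofAdd 1) (Multiplicative.ofAdd a)
      = Multiplicative.ofAdd ((ksR φ : ZMod (m * n)) * a) := by
  haveI : NeZero (m * n) := ⟨(Nat.mul_pos hm hn).ne'⟩
  have h1 : φ (Multiplicative.ofAdd 1) (Multiplicative.ofAdd 1)
      = Multiplicative.ofAdd (ksR φ : ZMod (m * n)) := by
    rw [ksR, ZMod.natCast_zmod_val]; rfl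
  have h2 : Multiplicative.ofAdd a = (Multiplicative.ofAdd (1 : ZMod (m * n))) ^ a.val := by
    rw [← ofAdd_nsmul, nsmul_eq_mul, mul_one, ZMod.natCast_zmod_val]
  rw [h2, map_pow, h1, ← ofAdd_nsmul, nsmul_eq_mul, ZMod.natCast_zmod_val, mul_comm a]

lemma ks_act (hm : 0 < m) (hn : 0 < n) (b : ℕ) (a : ZMod (m * n)) :
    φ (Multiplicative.ofAdd (b : ZMod m)) (Multiplicative.ofAdd a)
      = Multiplicative.ofAdd ((ksR φ : ZMod (m * n)) ^ b * a) := by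
  induction b generalizing a with
  | zero => simp
  | succ b ih =>
    rw [Nat.cast_succ, ofAdd_add, map_mul, MulAut.mul_apply, ks_act_one φ hm hn, ih, pow_succ,
      mul_assoc]

lemma ks_R_pow (hm : 0 < m) (hn : 0 < n) : ((ksR φ : ℕ) : ZMod (m * n)) ^ m = 1 := by
  have h := ks_act φ hm hn m 1
  rw [ZMod.natCast_self, ofAdd_zero, map_one, MulAut.one_apply, mul_one] at h
  exact (Multiplicative.ofAdd.injective h).symm

/-- reduction to the group -/
def ksTheta (hm : 0 < m) (hn : 0 < n) :
    KsM (ksR φ) →* (Multiplicative (ZMod (m * n)) ⋊[φ] Multiplicative (ZMod m)) where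
  toFun x := ⟨Multiplicative.ofAdd (x.a : ZMod (m * n)), Multiplicative.ofAdd (x.b : ZMod m)⟩
  map_one' := by
    ext <;> simp [KsM.one_a, KsM.one_b]
  map_mul' x y := by
    ext
    · rw [SemidirectProduct.mul_left]
      change Multiplicative.ofAdd (((x * y).a : ℤ) : ZMod (m * n))
        = Multiplicative.ofAdd ((x.a : ℤ) : ZMod (m * n))
          * φ (Multiplicative.ofAdd ((x.b : ℕ) : ZMod m))
            (Multiplicative.ofAdd ((y.a : ℤ) : ZMod (m * n)))
      rw [ks_act φ hm hn, ← ofAdd_add, KsM.mul_a]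
      push_cast
      rfl
    · rw [SemidirectProduct.mul_right]
      change Multiplicative.ofAdd (((x * y).b : ℕ) : ZMod m)
        = Multiplicative.ofAdd ((x.b : ℕ) : ZMod m) * Multiplicative.ofAdd ((y.b : ℕ) : ZMod m)
      rw [← ofAdd_add, KsM.mul_b]
      push_cast
      rfl

/-- lift to integers -/
def ksLift (g : Multiplicative (ZMod (m * n)) ⋊[φ] Multiplicative (ZMod m)) : KsM (ksR φ) :=
  ⟨((Multiplicative.toAdd g.left).val : ℤ), (Multiplicative.toAdd g.right).val, 1⟩

lemma ks_theta_lift (hm : 0 < m) (hn : 0 < n)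
    (g : Multiplicative (ZMod (m * n)) ⋊[φ] Multiplicative (ZMod m)) :
    ksTheta φ hm hn (ksLift φ g) = g := by
  haveI : NeZero (m * n) := ⟨(Nat.mul_pos hm hn).ne'⟩
  haveI : NeZero m := ⟨hm.ne'⟩
  ext
  · change Multiplicative.ofAdd (((Multiplicative.toAdd g.left).val : ℤ) : ZMod (m * n)) = _
    rw [Int.cast_natCast, ZMod.natCast_zmod_val]; rfl
  · change Multiplicative.ofAdd (((Multiplicative.toAdd g.right).val : ℕ) : ZMod m) = _
    rw [ZMod.natCast_zmod_val]; rfl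

lemma ks_theta_one (hm : 0 < m) (hn : 0 < n) (x : KsM (ksR φ)) (h : KsOne m n x) :
    ksTheta φ hm hn x = 1 := by
  ext
  · change Multiplicative.ofAdd (x.a : ZMod (m * n)) = 1
    rw [(ZMod.intCast_zmod_eq_zero_iff_dvd _ _).2 h.1]; rfl
  · change Multiplicative.ofAdd (x.b : ZMod m) = 1
    rw [(ZMod.natCast_eq_zero_iff _ _).2 h.2]; rfl

lemma ks_upper (hm : 0 < m) (hn : 0 < n)
    (S : Multiset (Multiplicative (ZMod (m * n)) ⋊[φ] Multiplicative (ZMod m)))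
    (hS : m ^ 2 * n + m * n + m - 2 ≤ Multiset.card S) :
    ∃ T ≤ S, Multiset.card T = m ^ 2 * n ∧ IsProductOne T := by
  induction S using Quotient.inductionOn with
  | _ l =>
  have hS' : m ^ 2 * n + m * n + m - 2 ≤ l.length := hS
  obtain ⟨T, t1, t2, t3⟩ := ks_exact hm hn (ks_R_pow φ hm hn) (l.map (ksLift φ))
    (by
      intro x hx
      obtain ⟨g, _, rfl⟩ := List.mem_map.1 hx
      rfl)
    (by rw [List.length_map]; omega)
  obtain ⟨L, h1, rfl⟩ := ks_subperm_map _ _ _ t1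
  refine ⟨(L : Multiset _), h1, by simpa using t3, L, rfl, ?_⟩
  have := ks_theta_one φ hm hn _ t2
  rw [map_list_prod, List.map_map] at this
  rw [← this]
  congr 1
  conv_lhs => rw [← List.map_id L]
  apply List.map_congr_left
  intro g _
  exact (ks_theta_lift φ hm hn g).symm

lemma ks_le_replicate_add {α : Type*} {a b : α} {A B : ℕ} {T : Multiset α}
    (h : T ≤ Multiset.replicate A a + Multiset.replicate B b) :
    ∃ i ≤ A, ∃ j ≤ B, T = Multiset.replicate i a + Multiset.replicate j b := by
  classical
  have h1 : T - Multiset.replicate A a ≤ Multiset.replicate B b := by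
    rw [tsub_le_iff_left]; exact h
  have h2 : T ∩ Multiset.replicate A a ≤ Multiset.replicate A a := Multiset.inter_le_right
  obtain ⟨j, hj, e1⟩ := Multiset.le_replicate_iff.1 h1
  obtain ⟨i, hi, e2⟩ := Multiset.le_replicate_iff.1 h2
  refine ⟨i, hi, j, hj, ?_⟩
  rw [← e1, ← e2, add_comm, Multiset.sub_add_inter]

lemma ks_lower_d (hm : 0 < m) (hn : 0 < n) :
    ∃ S : Multiset (Multiplicative (ZMod (m * n)) ⋊[φ] Multiplicative (ZMod m)),
      Multiset.card S = m * n + m - 2 ∧ ProductOneFree S := by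
  have hmn : 0 < m * n := Nat.mul_pos hm hn
  refine ⟨Multiset.replicate (m * n - 1) (SemidirectProduct.inl (Multiplicative.ofAdd 1))
    + Multiset.replicate (m - 1) (SemidirectProduct.inr (Multiplicative.ofAdd 1)), ?_, ?_⟩
  · simp; omega
  · intro T hT hne
    rintro ⟨l, hl, hprod⟩
    obtain ⟨i, hi, j, hj, rfl⟩ := ks_le_replicate_add hT
    have h1 := congrArg (SemidirectProduct.rightHom (φ := φ)) hprod
    rw [map_list_prod, map_one, ← Multiset.prod_coe, ← Multiset.map_coe, hl, Multiset.map_add,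
      Multiset.map_replicate, Multiset.map_replicate, Multiset.prod_add, Multiset.prod_replicate,
      Multiset.prod_replicate, SemidirectProduct.rightHom_inl, SemidirectProduct.rightHom_inr,
      one_pow, one_mul, ← ofAdd_nsmul, nsmul_eq_mul, mul_one, ofAdd_eq_one,
      ZMod.natCast_eq_zero_iff] at h1
    have hj0 : j = 0 := Nat.eq_zero_of_dvd_of_lt h1 (by omega)
    subst hj0
    rw [Multiset.replicate_zero, add_zero] at hl hne
    have hl2 : l = List.replicate i (SemidirectProduct.inl (Multiplicative.ofAdd 1)) := by
      rw [← Multiset.coe_replicate, Multiset.coe_eq_coe] at hl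
      exact List.perm_replicate.1 hl
    rw [hl2, List.prod_replicate, ← map_pow, ← map_one SemidirectProduct.inl] at hprod
    have h2 := SemidirectProduct.inl_injective hprod
    rw [← ofAdd_nsmul, nsmul_eq_mul, mul_one, ofAdd_eq_one, ZMod.natCast_eq_zero_iff] at h2
    have hi0 : i = 0 := Nat.eq_zero_of_dvd_of_lt h2 (by omega)
    subst hi0
    exact hne rfl

end

lemma ks_lower_E {G : Type*} [Group G] (S : Multiset G) (hS : ProductOneFree S) (N : ℕ)
    (T : Multiset G) (hT : T ≤ S + Multiset.replicate N 1) (hc : N < Multiset.card T) :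
    ¬ IsProductOne T := by
  classical
  rintro ⟨l, rfl, hprod⟩
  have h1 : (1 : G) ∉ S := fun h => hS {1} (Multiset.singleton_le.2 h) (by simp) ⟨[1], rfl, by simp⟩
  have hle : Multiset.filter (fun x => x ≠ 1) (l : Multiset G) ≤ S := by
    refine (Multiset.filter_le_filter _ hT).trans ?_
    rw [Multiset.filter_add]
    have : Multiset.filter (fun x => x ≠ 1) (Multiset.replicate N (1 : G)) = 0 := by
      rw [Multiset.filter_eq_nil]
      intro a ha
      simp [Multiset.eq_of_mem_replicate ha]
    rw [this, add_zero]
    exact Multiset.filter_le _ _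
  have hp : ∀ l : List G, (l.filter (fun x => x ≠ 1)).prod = l.prod := by
    intro l
    induction l with
    | nil => rfl
    | cons x l ih =>
      by_cases hx : x = 1
      · simp only [hx, List.prod_cons, one_mul, ← ih]; simp
      · rw [List.filter_cons_of_pos (by simpa using hx), List.prod_cons, List.prod_cons, ih]
  by_cases h0 : Multiset.filter (fun x => x ≠ 1) (l : Multiset G) = 0
  · rw [Multiset.filter_eq_nil] at h0
    have h2 : (l : Multiset G) = Multiset.replicate l.length 1 :=
      Multiset.eq_replicate.2 ⟨by simp, fun b hb => by simpa using h0 b hb⟩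
    have h3 := Multiset.count_le_of_le 1 hT
    rw [h2, Multiset.count_add, Multiset.count_replicate_self, Multiset.count_replicate_self,
      Multiset.count_eq_zero_of_notMem h1] at h3
    rw [Multiset.coe_card] at hc
    omega
  · refine hS _ hle h0 ⟨l.filter (fun x => x ≠ 1), by simp, ?_⟩
    rw [hp, hprod]

end KsSection

/-- For `G ≅ C_m ⋉_φ C_{mn}` (of order `m²n`),
`E(G) = |G| + d(G) = m²n + mn + m − 2`, and consequently `d(G) = mn + m − 2`. -/
theorem EGZ_for_semidirect (m n : ℕ) (hm : 0 < m) (hn : 0 < n)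
    (φ : Multiplicative (ZMod m) →* MulAut (Multiplicative (ZMod (m * n))))
    (d E : ℕ)
    (hd : IsGreatest {k : ℕ |
      ∃ S : Multiset (Multiplicative (ZMod (m * n)) ⋊[φ] Multiplicative (ZMod m)),
        Multiset.card S = k ∧ ProductOneFree S} d)
    (hE : IsLeast {l : ℕ |
      ∀ S : Multiset (Multiplicative (ZMod (m * n)) ⋊[φ] Multiplicative (ZMod m)),
        l ≤ Multiset.card S →
        ∃ T ≤ S, Multiset.card T = m ^ 2 * n ∧ IsProductOne T} E) :
    E = m ^ 2 * n + d ∧ E = m ^ 2 * n + m * n + m - 2 ∧ d = m * n + m - 2 := by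
  have hmn : m ≤ m * n := Nat.le_mul_of_pos_right m hn
  have hpos : 0 < m ^ 2 * n := Nat.mul_pos (pow_pos hm 2) hn
  have h1 : m * n + m - 2 ≤ d := hd.2 (ks_lower_d φ hm hn)
  have h2 : E ≤ m ^ 2 * n + m * n + m - 2 := hE.2 (fun S hS => ks_upper φ hm hn S hS)
  have h3 : m ^ 2 * n + d ≤ E := by
    by_contra hlt
    obtain ⟨S, hSc, hS⟩ := hd.1
    obtain ⟨T, hT, hTc, hT1⟩ := hE.1 (S + Multiset.replicate (m ^ 2 * n - 1) 1) (by
      rw [Multiset.card_add, Multiset.card_replicate]; omega)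
    exact ks_lower_E S hS _ T hT (by omega) hT1
  refine ⟨?_, ?_, ?_⟩ <;> omega
end

section
/- Let G ≅ C_m ⋉_φ C_{mn} and suppose e(G) = mn, where e(G) = max{ord(g) : g ∈ G}. Then η(G) ≤ 2m + mn − 2 and s(G) ≤ 2m + 2mn − 3. -/
namespace Kemnitz

lemma two_add_self (x : ZMod 2 × ZMod 2) : x + x = 0 := by
  revert x; decide

open Finset MvPolynomial

section
set_option linter.unusedSectionVars false
set_option linter.unusedSimpArgs false
variable {ι : Type*} [DecidableEq ι] {p : ℕ} [Fact p.Prime]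

/-- alternating sums of low degree polynomials vanish -/
lemma alt_sum (J : Finset ι) (P : MvPolynomial ι (ZMod p)) (hP : P.totalDegree < #J) :
    ∑ T ∈ J.powerset, (-1 : ZMod p) ^ #T * eval (fun i => if i ∈ T then 1 else 0) P = 0 := by
  simp_rw [eval_eq, mul_sum]
  rw [sum_comm]
  refine sum_eq_zero fun d hd => ?_
  have hlt : #d.support < #J := by
    refine lt_of_le_of_lt ?_ hP
    refine le_trans ?_ (le_totalDegree hd)
    rw [Finsupp.sum, card_eq_sum_ones]
    refine sum_le_sum fun i hi => ?_
    have := Finsupp.mem_support_iff.1 hi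
    omega
  obtain ⟨j, hjJ, hj⟩ := exists_mem_notMem_of_card_lt_card hlt
  obtain ⟨J', hJ', rfl⟩ : ∃ J', j ∉ J' ∧ J = insert j J' :=
    ⟨J.erase j, by simp, by simp [insert_erase hjJ]⟩
  rw [sum_powerset_insert hJ', ← sum_add_distrib]
  refine sum_eq_zero fun T hT => ?_
  have hjT : j ∉ T := fun h => hJ' (mem_powerset.1 hT h)
  rw [card_insert_of_notMem hjT]
  have : ∏ i ∈ d.support, (if i ∈ insert j T then (1 : ZMod p) else 0) ^ d i =
      ∏ i ∈ d.support, (if i ∈ T then (1 : ZMod p) else 0) ^ d i := by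
    refine prod_congr rfl fun i hi => ?_
    have : i ≠ j := fun h => hj (h ▸ hi)
    simp [this]
  rw [this]
  ring

/-- the linear form with coefficients `a` on `J` -/
noncomputable def lin (J : Finset ι) (a : ι → ZMod p) : MvPolynomial ι (ZMod p) :=
  ∑ i ∈ J, C (a i) * X i

lemma lin_deg (J : Finset ι) (a : ι → ZMod p) : (lin J a).totalDegree ≤ 1 := by
  refine totalDegree_finsetSum_le fun i _ => ?_
  refine (totalDegree_mul _ _).trans ?_
  simp

lemma lin_eval (J T : Finset ι) (h : T ⊆ J) (a : ι → ZMod p) :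
    eval (fun i => if i ∈ T then 1 else 0) (lin J a) = ∑ i ∈ T, a i := by
  simp [lin, map_sum, sum_ite_mem, inter_eq_right.2 h]

lemma ind_deg (L : MvPolynomial ι (ZMod p)) (h : L.totalDegree ≤ 1) :
    (1 - L ^ (p - 1)).totalDegree ≤ p - 1 := by
  refine (totalDegree_sub _ _).trans ?_
  refine max_le (by simp) ((totalDegree_pow _ _).trans ?_)
  exact (Nat.mul_le_mul_left _ h).trans (by simp)

lemma add_const_deg (L : MvPolynomial ι (ZMod p)) (h : L.totalDegree ≤ 1) (c : ZMod p) :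
    (L + C c).totalDegree ≤ 1 :=
  (totalDegree_add _ _).trans (max_le h (by simp))

lemma ind_val (x : ZMod p) : 1 - x ^ (p - 1) = if x = 0 then 1 else 0 := by
  rw [ZMod.pow_card_sub_one]; split_ifs <;> simp_all

lemma altB (J : Finset ι) (f : ι → ZMod p × ZMod p) (c : ZMod p) (hJ : 3 * p - 2 ≤ #J) :
    ∑ T ∈ J.powerset, (-1 : ZMod p) ^ #T * ((if ∑ i ∈ T, f i = 0 then 1 else 0) *
      (if (#T : ZMod p) + c = 0 then 1 else 0)) = 0 := by
  have hp := (Fact.out : p.Prime).two_le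
  refine Eq.trans ?_ (alt_sum J ((1 - lin J (fun i => (f i).1) ^ (p - 1)) * (1 - lin J (fun i => (f i).2) ^ (p - 1))
    * (1 - (lin J (fun _ => 1) + C c) ^ (p - 1))) ?_)
  · refine sum_congr rfl fun T hT => ?_
    have hT := mem_powerset.1 hT
    congr 1
    simp only [map_mul, map_sub, map_pow, map_add, lin_eval J T hT, eval_C, map_one, ind_val]
    simp [Prod.ext_iff, Prod.fst_sum, Prod.snd_sum, ite_and]
    split_ifs <;> rfl
  · have h1 := ind_deg _ (lin_deg J (fun i => (f i).1))
    have h2 := ind_deg _ (lin_deg J (fun i => (f i).2))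
    have h3 := ind_deg _ (add_const_deg _ (lin_deg J (fun _ => (1 : ZMod p))) c)
    refine ((totalDegree_mul _ _).trans (add_le_add ((totalDegree_mul _ _).trans
      (add_le_add h1 h2)) h3)).trans_lt ?_
    omega

lemma altB' (J : Finset ι) (f : ι → ZMod p × ZMod p) (hJ : 3 * p - 3 ≤ #J) :
    ∑ T ∈ J.powerset, (-1 : ZMod p) ^ #T * ((if ∑ i ∈ T, f i = 0 then 1 else 0) *
      ((if (#T : ZMod p) + 0 = 0 then 1 else 0) - (if (#T : ZMod p) + 1 = 0 then 1 else 0))) = 0 := by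
  have hp := (Fact.out : p.Prime).two_le
  set L := lin J (fun _ => (1 : ZMod p)) with hL
  refine Eq.trans ?_ (alt_sum J ((1 - lin J (fun i => (f i).1) ^ (p - 1)) * (1 - lin J (fun i => (f i).2) ^ (p - 1))
    * (∑ i ∈ range (p - 1), (L + C 1) ^ i * L ^ (p - 1 - 1 - i))) ?_)
  · refine sum_congr rfl fun T hT => ?_
    have hT := mem_powerset.1 hT
    congr 1
    have : (∑ i ∈ range (p - 1), (L + C 1) ^ i * L ^ (p - 1 - 1 - i)) =
        (1 - L ^ (p - 1)) - (1 - (L + C 1) ^ (p - 1)) := by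
      have := geom_sum₂_mul (L + C 1) L (p - 1)
      rw [add_sub_cancel_left, C_1, mul_one] at this
      rw [C_1, this]; ring
    rw [this]
    simp only [map_mul, map_sub, map_pow, map_add, lin_eval J T hT, eval_C, map_one, ind_val, hL]
    simp [Prod.ext_iff, Prod.fst_sum, Prod.snd_sum, ite_and]
    split_ifs <;> rfl
  · have h1 := ind_deg _ (lin_deg J (fun i => (f i).1))
    have h2 := ind_deg _ (lin_deg J (fun i => (f i).2))
    have h3 : (∑ i ∈ range (p - 1), (L + C 1) ^ i * L ^ (p - 1 - 1 - i)).totalDegree ≤ p - 2 := by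
      refine totalDegree_finsetSum_le fun i hi => ?_
      have := mem_range.1 hi
      have e1 := (totalDegree_pow (L + C 1) i).trans
        (Nat.mul_le_mul_left _ (add_const_deg L (lin_deg J _) 1))
      have e2 := (totalDegree_pow L (p - 1 - 1 - i)).trans
        (Nat.mul_le_mul_left _ (lin_deg J _))
      refine (totalDegree_mul _ _).trans ((add_le_add e1 e2).trans ?_)
      omega
    refine ((totalDegree_mul _ _).trans (add_le_add ((totalDegree_mul _ _).trans
      (add_le_add h1 h2)) h3)).trans_lt ?_
    omega

/-- number of `k`-subsets of `J` with zero sum -/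
def cnt (f : ι → ZMod p × ZMod p) (J : Finset ι) (k : ℕ) : ℕ :=
  #{T ∈ J.powersetCard k | ∑ i ∈ T, f i = 0}

lemma cnt_zero (f : ι → ZMod p × ZMod p) (J : Finset ι) : cnt f J 0 = 1 := by
  simp [cnt, filter_singleton]

lemma cnt_big (f : ι → ZMod p × ZMod p) (J : Finset ι) (k : ℕ) (h : #J < k) : cnt f J k = 0 := by
  simp [cnt, powersetCard_eq_empty.2 h]

lemma cnt_mono (f : ι → ZMod p × ZMod p) {I J : Finset ι} (h : I ⊆ J) {k : ℕ}
    (h0 : cnt f J k = 0) : cnt f I k = 0 :=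
  Nat.le_zero.1 (h0 ▸ card_le_card (filter_subset_filter _ (powersetCard_mono h)))

lemma alt_to_cnt (f : ι → ZMod p × ZMod p) (J : Finset ι) (h : ℕ → ZMod p) (N : ℕ) (hN : #J < N) :
    ∑ T ∈ J.powerset, (-1 : ZMod p) ^ #T * ((if ∑ i ∈ T, f i = 0 then 1 else 0) * h #T) =
    ∑ k ∈ range N, (-1 : ZMod p) ^ k * cnt f J k * h k := by
  rw [sum_powerset, ← sum_subset (range_subset_range.2 hN)]
  · refine sum_congr rfl fun k _ => ?_
    rw [cnt, ← sum_boole, mul_sum, sum_mul]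
    refine sum_congr rfl fun T hT => ?_
    rw [(mem_powersetCard.1 hT).2]; ring
  · intro k _ hk
    rw [mem_range] at hk
    rw [cnt_big f J k (by omega)]; simp

lemma cast_eq_zero_cases {k : ℕ} (hk : k < 4 * p) (h : (k : ZMod p) = 0) :
    k = 0 ∨ k = p ∨ k = 2 * p ∨ k = 3 * p := by
  obtain ⟨q, rfl⟩ := (ZMod.natCast_eq_zero_iff _ _).1 h
  have : q < 4 := by
    by_contra hq
    have := Nat.mul_le_mul_left p (not_lt.1 hq)
    omega
  interval_cases q <;> omega

lemma sum_zero_mod (F : ℕ → ZMod p) :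
    ∑ k ∈ range (4 * p), F k * (if (k : ZMod p) + 0 = 0 then 1 else 0) =
      F 0 + F p + F (2 * p) + F (3 * p) := by
  have hp := (Fact.out : p.Prime).two_le
  rw [← sum_subset (s₁ := {0, p, 2 * p, 3 * p})]
  · rw [sum_insert, sum_insert, sum_insert, sum_singleton]
    · simp; ring
    all_goals simp only [mem_insert, mem_singleton]; omega
  · intro k; simp only [mem_insert, mem_singleton, mem_range]; omega
  · intro k hk hk'
    rw [if_neg, mul_zero]
    intro h
    rw [add_zero] at h
    apply hk'
    simpa using cast_eq_zero_cases (mem_range.1 hk) h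

lemma sum_one_mod (F : ℕ → ZMod p) :
    ∑ k ∈ range (4 * p), F k * (if (k : ZMod p) + 1 = 0 then 1 else 0) =
      F (p - 1) + F (2 * p - 1) + F (3 * p - 1) + F (4 * p - 1) := by
  have hp := (Fact.out : p.Prime).two_le
  have key : ∀ q, 1 ≤ q → ((q * p - 1 : ℕ) : ZMod p) + 1 = 0 := by
    intro q hq
    have : 1 ≤ q * p := by nlinarith
    push_cast [Nat.cast_sub this]
    simp
  rw [← sum_subset (s₁ := {p - 1, 2 * p - 1, 3 * p - 1, 4 * p - 1})]
  · rw [sum_insert, sum_insert, sum_insert, sum_singleton]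
    · have := key 1 le_rfl
      rw [one_mul] at this
      rw [if_pos this, if_pos (key 2 (by norm_num)), if_pos (key 3 (by norm_num)),
        if_pos (key 4 (by norm_num))]
      ring
    all_goals simp only [mem_insert, mem_singleton]; omega
  · intro k; simp only [mem_insert, mem_singleton, mem_range]; omega
  · intro k hk hk'
    rw [if_neg, mul_zero]
    intro h
    apply hk'
    have h' : ((k + 1 : ℕ) : ZMod p) = 0 := by exact_mod_cast h
    have hk := mem_range.1 hk
    obtain hlt | heq := Nat.lt_or_ge (k + 1) (4 * p)
    · have := cast_eq_zero_cases hlt h'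
      simp only [mem_insert, mem_singleton]; omega
    · simp only [mem_insert, mem_singleton]; omega

lemma neg_pows (hp2 : p ≠ 2) : (-1 : ZMod p) ^ p = -1 ∧ (-1 : ZMod p) ^ (2 * p) = 1 ∧
    (-1 : ZMod p) ^ (3 * p) = -1 ∧ (-1 : ZMod p) ^ (p - 1) = 1 ∧ (-1 : ZMod p) ^ (2 * p - 1) = -1 ∧
    (-1 : ZMod p) ^ (3 * p - 1) = 1 := by
  obtain ⟨r, hr⟩ := (Fact.out : p.Prime).odd_of_ne_two hp2
  refine ⟨Odd.neg_one_pow ⟨r, hr⟩, Even.neg_one_pow ⟨p, by omega⟩, Odd.neg_one_pow ⟨3 * r + 1, by omega⟩,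
    Even.neg_one_pow ⟨r, by omega⟩, Odd.neg_one_pow ⟨p - 1, by omega⟩,
    Even.neg_one_pow ⟨3 * r + 1, by omega⟩⟩

/-- (II) and (IV a) -/
lemma rel_zero (hp2 : p ≠ 2) (f : ι → ZMod p × ZMod p) (J : Finset ι) (h1 : 3 * p - 2 ≤ #J)
    (h2 : #J < 4 * p) :
    (1 : ZMod p) - cnt f J p + cnt f J (2 * p) - cnt f J (3 * p) = 0 := by
  have := altB J f 0 h1
  rw [alt_to_cnt f J (fun k => if (k : ZMod p) + 0 = 0 then 1 else 0) _ h2, sum_zero_mod] at this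
  obtain ⟨e1, e2, e3, -⟩ := neg_pows hp2
  rw [e1, e2, e3, cnt_zero] at this
  push_cast at this
  linear_combination this

/-- (IV b) -/
lemma rel_one (hp2 : p ≠ 2) (f : ι → ZMod p × ZMod p) (J : Finset ι) (h1 : 3 * p - 2 ≤ #J)
    (h2 : #J < 4 * p - 1) :
    (cnt f J (p - 1) : ZMod p) - cnt f J (2 * p - 1) + cnt f J (3 * p - 1) = 0 := by
  have := altB J f 1 h1
  rw [alt_to_cnt f J (fun k => if (k : ZMod p) + 1 = 0 then 1 else 0) (4 * p) (by omega),
    sum_one_mod, cnt_big f J (4 * p - 1) h2] at this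
  obtain ⟨-, -, -, e1, e2, e3⟩ := neg_pows hp2
  rw [e1, e2, e3] at this
  push_cast at this
  linear_combination this

lemma choose_p (n : ℕ) : (n.choose p : ZMod p) = (n / p : ℕ) := by
  have := Choose.choose_modEq_choose_mod_mul_choose_div_nat (n := n) (k := p) (p := p)
  rw [Nat.mod_self, Nat.div_self (Fact.out : p.Prime).pos] at this
  simpa using (ZMod.natCast_eq_natCast_iff _ _ _).2 this

/-- (V) -/
lemma rel_five (hp2 : p ≠ 2) (f : ι → ZMod p × ZMod p) (X : Finset ι) (hX : #X = 4 * p - 3) :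
    (3 : ZMod p) - 2 * cnt f X (p - 1) - 2 * cnt f X p + cnt f X (2 * p - 1) + cnt f X (2 * p)
      = 0 := by
  have hp : 3 ≤ p := by have := (Fact.out : p.Prime).two_le; omega
  set h : ℕ → ZMod p := fun k => (if (k : ZMod p) + 0 = 0 then 1 else 0) -
    (if (k : ZMod p) + 1 = 0 then 1 else 0) with hh
  have h0 : ∑ J ∈ X.powersetCard (3 * p - 3), ∑ T ∈ J.powerset, (-1 : ZMod p) ^ #T *
      ((if ∑ i ∈ T, f i = 0 then 1 else 0) * h #T) = 0 :=
    sum_eq_zero fun J hJ => altB' J f (mem_powersetCard.1 hJ).2.ge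
  have h1 : ∑ T ∈ X.powerset, (-1 : ZMod p) ^ #T *
      ((if ∑ i ∈ T, f i = 0 then 1 else 0) * (h #T *
        (#{J ∈ X.powersetCard (3 * p - 3) | T ⊆ J} : ℕ))) = 0 := by
    refine Eq.trans ?_ h0
    rw [sum_comm' (t' := X.powerset) (s' := fun T => {J ∈ X.powersetCard (3 * p - 3) | T ⊆ J})]
    · refine sum_congr rfl fun T _ => ?_
      rw [sum_const, nsmul_eq_mul]; ring
    · intro J T
      simp only [mem_powersetCard, mem_powerset, mem_filter]
      constructor
      · rintro ⟨⟨a, b⟩, c⟩; exact ⟨⟨⟨a, b⟩, c⟩, c.trans a⟩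
      · rintro ⟨⟨⟨a, b⟩, c⟩, _⟩; exact ⟨⟨a, b⟩, c⟩
  have h2 : ∑ T ∈ X.powerset, (-1 : ZMod p) ^ #T *
      ((if ∑ i ∈ T, f i = 0 then 1 else 0) * (h #T *
        (if #T ≤ 3 * p - 3 then ((4 * p - 3 - #T) / p : ℕ) else 0 : ℕ))) = 0 := by
    refine Eq.trans ?_ h1
    refine sum_congr rfl fun T hT => ?_
    have hT := mem_powerset.1 hT
    congr 3
    split_ifs with hc
    · rw [card_filter_powersetCard_subset _ _ _ hT (by omega), hX, ← choose_p]
      rw [← Nat.choose_symm_of_eq_add]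
      omega
    · rw [card_eq_zero.2]
      rw [filter_eq_empty_iff]
      intro J hJ hTJ
      have := card_le_card hTJ
      rw [(mem_powersetCard.1 hJ).2] at this
      omega
  rw [alt_to_cnt f X (fun k => h k * (if k ≤ 3 * p - 3 then ((4 * p - 3 - k) / p : ℕ) else 0 : ℕ))
    (4 * p) (by omega)] at h2
  have h3 : ∑ k ∈ range (4 * p), ((-1 : ZMod p) ^ k * cnt f X k *
        (if k ≤ 3 * p - 3 then ((4 * p - 3 - k) / p : ℕ) else 0 : ℕ)) *
          (if (k : ZMod p) + 0 = 0 then 1 else 0) -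
      ∑ k ∈ range (4 * p), ((-1 : ZMod p) ^ k * cnt f X k *
        (if k ≤ 3 * p - 3 then ((4 * p - 3 - k) / p : ℕ) else 0 : ℕ)) *
          (if (k : ZMod p) + 1 = 0 then 1 else 0) = 0 := by
    refine Eq.trans ?_ h2
    rw [← sum_sub_distrib]
    refine sum_congr rfl fun k _ => ?_
    simp only [hh]; ring
  rw [sum_zero_mod, sum_one_mod] at h3
  obtain ⟨e1, e2, e3, e4, e5, e6⟩ := neg_pows hp2
  have dv : ∀ a q, q * p ≤ a → a < (q + 1) * p → a / p = q := fun a q h1 h2 =>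
    Nat.div_eq_of_lt_le h1 h2
  rw [if_pos (by omega), if_pos (by omega), if_pos (by omega), if_neg (by omega),
    if_pos (by omega), if_pos (by omega), if_neg (by omega), if_neg (by omega),
    dv (4 * p - 3 - 0) 3 (by omega) (by omega),
    dv (4 * p - 3 - p) 2 (by omega) (by omega),
    dv (4 * p - 3 - 2 * p) 1 (by omega) (by omega),
    dv (4 * p - 3 - (p - 1)) 2 (by omega) (by omega),
    dv (4 * p - 3 - (2 * p - 1)) 1 (by omega) (by omega),
    e1, e2, e4, e5, cnt_zero] at h3
  push_cast at h3
  linear_combination h3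

/-- Alon-Dubiner -/
lemma cnt_three (hp2 : p ≠ 2) (f : ι → ZMod p × ZMod p) (X : Finset ι) (h0 : cnt f X p = 0) :
    cnt f X (3 * p) = 0 := by
  have hp : 3 ≤ p := by have := (Fact.out : p.Prime).two_le; omega
  by_contra hne
  obtain ⟨J, hJ⟩ := card_ne_zero.1 hne
  obtain ⟨hJ, hJs⟩ := mem_filter.1 hJ
  obtain ⟨hJX, hJc⟩ := mem_powersetCard.1 hJ
  have hJ0 := cnt_mono f hJX h0
  have : J.Nonempty := card_pos.1 (by omega)
  obtain ⟨a, ha⟩ := this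
  have hc : #(J.erase a) = 3 * p - 1 := by rw [card_erase_of_mem ha, hJc]
  have := rel_zero hp2 f (J.erase a) (by omega) (by omega)
  rw [cnt_mono f (erase_subset a J) hJ0, cnt_big f (J.erase a) (3 * p) (by omega)] at this
  have h2 : cnt f (J.erase a) (2 * p) = 0 := by
    refine cnt_mono f (erase_subset a J) ?_
    rw [cnt, card_eq_zero, filter_eq_empty_iff]
    intro T hT hTs
    obtain ⟨hTJ, hTc⟩ := mem_powersetCard.1 hT
    refine card_ne_zero.2 ⟨J \ T, ?_⟩ hJ0
    rw [mem_filter, mem_powersetCard]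
    refine ⟨⟨sdiff_subset, by rw [card_sdiff_of_subset hTJ]; omega⟩, ?_⟩
    have := sum_sdiff (f := f) hTJ
    rw [hTs, hJs, add_zero] at this
    exact this
  rw [h2] at this
  simp at this

/-- (VI) -/
lemma rel_six (hp2 : p ≠ 2) (f : ι → ZMod p × ZMod p) (X : Finset ι) (hX : #X = 4 * p - 3)
    (h0 : cnt f X p = 0) : (cnt f X (p - 1) : ZMod p) = cnt f X (3 * p - 1) := by
  have hp : 3 ≤ p := by have := (Fact.out : p.Prime).two_le; omega
  have key : ∀ J ⊆ X, 3 * p - 2 ≤ #J → #J < 3 * p → (cnt f J (2 * p) : ZMod p) = -1 := by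
    intro J hJ h1 h2
    have := rel_zero hp2 f J h1 (by omega)
    rw [cnt_mono f hJ h0, cnt_big f J _ h2] at this
    push_cast at this
    linear_combination this
  have e : ∑ A ∈ X.powersetCard (p - 1) with ∑ i ∈ A, f i = 0, cnt f (X \ A) (2 * p) =
      ∑ D ∈ X.powersetCard (3 * p - 1) with ∑ i ∈ D, f i = 0, cnt f D (2 * p) := by
    simp only [cnt]
    rw [← card_sigma, ← card_sigma]
    refine card_bij' (fun x _ => ⟨x.1 ∪ x.2, x.2⟩) (fun x _ => ⟨x.1 \ x.2, x.2⟩) ?_ ?_ ?_ ?_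
    · rintro ⟨A, T⟩ h
      simp only [mem_sigma, mem_filter, mem_powersetCard, subset_sdiff] at h ⊢
      obtain ⟨⟨⟨h1, h2⟩, h3⟩, ⟨⟨⟨h4, h5⟩, h6⟩, h7⟩⟩ := h
      refine ⟨⟨⟨union_subset h1 h4, ?_⟩, ?_⟩, ⟨subset_union_right, h6⟩, h7⟩
      · rw [card_union_of_disjoint h5.symm]; omega
      · rw [sum_union h5.symm, h3, h7, add_zero]
    · rintro ⟨A, T⟩ h
      simp only [mem_sigma, mem_filter, mem_powersetCard, subset_sdiff] at h ⊢
      obtain ⟨⟨⟨h1, h2⟩, h3⟩, ⟨⟨h4, h6⟩, h7⟩⟩ := h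
      refine ⟨⟨⟨sdiff_subset.trans h1, ?_⟩, ?_⟩, ⟨⟨h4.trans h1, disjoint_sdiff⟩, h6⟩, h7⟩
      · rw [card_sdiff_of_subset h4]; omega
      · have := sum_sdiff (f := f) h4
        rwa [h7, h3, add_zero] at this
    · rintro ⟨A, T⟩ h
      simp only [mem_sigma, mem_filter, mem_powersetCard, subset_sdiff] at h
      simp [union_sdiff_cancel_right h.2.1.1.2.symm]
    · rintro ⟨A, T⟩ h
      simp only [mem_sigma, mem_filter, mem_powersetCard, subset_sdiff] at h
      simp [sdiff_union_of_subset h.2.1.1]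
  have e' := congrArg (Nat.cast : ℕ → ZMod p) e
  push_cast at e'
  rw [sum_congr rfl (g := fun _ => (-1 : ZMod p)), sum_congr (s₁ := filter _ (X.powersetCard (3 * p - 1))) rfl (g := fun _ => (-1 : ZMod p))] at e'
  · simp only [sum_const, nsmul_eq_mul] at e'
    simp only [cnt]
    linear_combination -e'
  · intro D hD
    obtain ⟨hD, -⟩ := mem_filter.1 hD
    obtain ⟨hDX, hDc⟩ := mem_powersetCard.1 hD
    exact key D hDX (by omega) (by omega)
  · intro D hD
    obtain ⟨hD, -⟩ := mem_filter.1 hD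
    obtain ⟨hDX, hDc⟩ := mem_powersetCard.1 hD
    have := card_sdiff_of_subset hDX
    exact key _ sdiff_subset (by omega) (by omega)

theorem kemnitz (f : ι → ZMod p × ZMod p) (X : Finset ι) (hX : 4 * p - 3 ≤ #X) :
    ∃ T ⊆ X, #T = p ∧ ∑ i ∈ T, f i = 0 := by
  by_cases hp2 : p = 2
  · subst hp2
    obtain ⟨a, ha, b, hb, hab, h⟩ := exists_ne_map_eq_of_card_lt_of_maps_to (s := X)
      (t := (univ : Finset (ZMod 2 × ZMod 2))) (f := f) (by
        have : #(univ : Finset (ZMod 2 × ZMod 2)) = 4 := by decide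
        omega) (by simp)
    refine ⟨{a, b}, ?_, card_pair hab, ?_⟩
    · intro x; simp only [mem_insert, mem_singleton]; rintro (rfl | rfl) <;> assumption
    · rw [sum_pair hab, h]
      exact two_add_self _
  obtain ⟨X', hX', hc⟩ := exists_subset_card_eq hX
  by_contra hcon
  have h0 : cnt f X' p = 0 := by
    rw [cnt, card_eq_zero, filter_eq_empty_iff]
    intro T hT hTs
    obtain ⟨h1, h2⟩ := mem_powersetCard.1 hT
    exact hcon ⟨T, h1.trans hX', h2, hTs⟩
  have hp : 3 ≤ p := by have := (Fact.out : p.Prime).two_le; omega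
  have r0 := rel_zero hp2 f X' (by omega) (by omega)
  have r1 := rel_one hp2 f X' (by omega) (by omega)
  have r5 := rel_five hp2 f X' hc
  have r6 := rel_six hp2 f X' hc h0
  rw [h0, cnt_three hp2 f X' h0] at r0
  rw [h0] at r5
  push_cast at r0 r5
  have : ((2 : ℕ) : ZMod p) = 0 := by
    push_cast
    linear_combination r5 - r0 + r1 + r6
  have := Nat.le_of_dvd (by norm_num) ((ZMod.natCast_eq_zero_iff _ _).1 this)
  omega

end

section groups
set_option linter.unusedSectionVars false

lemma kemnitz_multiset {α : Type*} {p : ℕ} [Fact p.Prime] (S : Multiset α)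
    (f : α → ZMod p × ZMod p) (h : 4 * p - 3 ≤ Multiset.card S) :
    ∃ T ≤ S, Multiset.card T = p ∧ (T.map f).sum = 0 := by
  classical
  obtain ⟨t, hts, h1, h2⟩ := kemnitz (fun i : α × ℕ => f i.1) S.toEnumFinset (by simpa using h)
  refine ⟨t.1.map Prod.fst, Multiset.map_fst_le_of_subset_toEnumFinset hts, by simpa using h1, ?_⟩
  rw [Multiset.map_map]
  exact h2

lemma egz_multiset {α : Type*} {n : ℕ} (S : Multiset α)
    (f : α → ZMod n) (h : 2 * n - 1 ≤ Multiset.card S) :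
    ∃ T ≤ S, Multiset.card T = n ∧ (T.map f).sum = 0 := by
  classical
  obtain ⟨t, hts, h1, h2⟩ := ZMod.erdos_ginzburg_ziv (s := S.toEnumFinset)
    (fun i : α × ℕ => f i.1) (by simpa using h)
  refine ⟨t.1.map Prod.fst, Multiset.map_fst_le_of_subset_toEnumFinset hts, by simpa using h1, ?_⟩
  rw [Multiset.map_map]
  exact h2

variable {G : Type*} [Group G]

lemma comm_pow {x y : G} {u : ℕ} (h : y * x = x ^ u * y) (j i : ℕ) :
    y ^ j * x ^ i = x ^ (u ^ j * i) * y ^ j := by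
  induction j generalizing i with
  | zero => simp
  | succ j ih =>
    have h1 : y * x ^ i = x ^ (u * i) * y := by
      have : SemiconjBy y x (x ^ u) := h
      have := this.pow_right i
      rw [← pow_mul] at this
      exact this
    rw [pow_succ y j, mul_assoc, h1, ← mul_assoc, ih, mul_assoc, pow_succ u j, mul_assoc (u ^ j)]

lemma list_prod_form {x y : G} {u p : ℕ} (h : y * x = x ^ u * y) (hu : u ≡ 1 [MOD p])
    (I J : G → ℕ) (l : List G) (hl : ∀ g ∈ l, g = x ^ I g * y ^ J g) :
    ∃ a, l.prod = x ^ a * y ^ (l.map J).sum ∧ a ≡ (l.map I).sum [MOD p] := by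
  induction l with
  | nil => exact ⟨0, by simp, by simp; rfl⟩
  | cons g l ih =>
    obtain ⟨a, h1, h2⟩ := ih fun g hg => hl g (List.mem_cons_of_mem _ hg)
    refine ⟨I g + u ^ J g * a, ?_, ?_⟩
    · rw [List.prod_cons, h1, List.map_cons, List.sum_cons, pow_add x, pow_add y]
      conv_lhs => rw [hl g List.mem_cons_self]
      have := comm_pow h (J g) a
      calc x ^ I g * y ^ J g * (x ^ a * y ^ (l.map J).sum)
          = x ^ I g * (y ^ J g * x ^ a) * y ^ (l.map J).sum := by group
        _ = _ := by rw [this]; group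
    · rw [List.map_cons, List.sum_cons]
      have h3 := (hu.pow (J g)).mul h2
      rw [one_pow, one_mul] at h3
      exact h3.add_left _

lemma blocks (p N : ℕ) (R : List G → Prop) (S : Multiset G)
    (hR : ∀ S' ≤ S, N + p ≤ Multiset.card S' → ∃ l : List G, (l : Multiset G) ≤ S' ∧ l.length = p ∧ R l)
    (k : ℕ) (hk : k * p + N ≤ Multiset.card S) :
    ∃ Q : Multiset (List G), Multiset.card Q = k ∧ (∀ l ∈ Q, l.length = p ∧ R l) ∧
      (Q.map (Multiset.ofList (α := G))).sum ≤ S := by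
  induction k generalizing S with
  | zero => exact ⟨0, by simp⟩
  | succ k ih =>
    obtain ⟨l, hl, hlp, hlR⟩ := hR S le_rfl (by nlinarith)
    obtain ⟨S', rfl⟩ := Multiset.le_iff_exists_add.1 hl
    obtain ⟨Q, h1, h2, h3⟩ := ih S' (fun S'' hS'' => hR S'' (hS''.trans (Multiset.le_add_left _ _)))
      (by rw [Multiset.card_add, Multiset.coe_card, hlp] at hk; nlinarith)
    refine ⟨l ::ₘ Q, by simp [h1], ?_, ?_⟩
    · intro l' hl'
      rcases Multiset.mem_cons.1 hl' with rfl | h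
      · exact ⟨hlp, hlR⟩
      · exact h2 _ h
    · rw [Multiset.map_cons, Multiset.sum_cons]
      exact add_le_add_right h3 _

lemma lift_list {α β : Type*} (f : α → β) (l : List β) (Q : Multiset α)
    (h : (l : Multiset β) ≤ Q.map f) : ∃ Q' : List α, (Q' : Multiset α) ≤ Q ∧ Q'.map f = l := by
  induction l generalizing Q with
  | nil => exact ⟨[], by simp, rfl⟩
  | cons b l ih =>
    obtain ⟨q, hq, rfl⟩ := Multiset.mem_map.1 (Multiset.mem_of_le h (show b ∈ ((b :: l : List β) : Multiset β) by simp))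
    obtain ⟨R, rfl⟩ := Multiset.exists_cons_of_mem hq
    rw [Multiset.map_cons, ← Multiset.cons_coe, Multiset.cons_le_cons_iff] at h
    obtain ⟨Q', h1, h2⟩ := ih R h
    exact ⟨q :: Q', by rw [← Multiset.cons_coe]; exact Multiset.cons_le_cons _ h1, by simp [h2]⟩

lemma coe_flatten_sum {α : Type*} (Q : List (List α)) :
    (Q.flatten : Multiset α) = (Multiset.map (Multiset.ofList (α := α)) (Multiset.ofList Q)).sum := by
  induction Q with
  | nil => simp
  | cons a Q ih =>
    rw [List.flatten_cons, ← Multiset.coe_add, ih, ← Multiset.cons_coe, Multiset.map_cons,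
      Multiset.sum_cons]

lemma u_mod {m u : ℕ} (hm : m ≠ 1) (hm0 : 0 < m) (h : u ^ m ≡ 1 [MOD m]) :
    u ≡ 1 [MOD m.minFac] := by
  have hp := Nat.minFac_prime hm
  have := Fact.mk hp
  have h1 : u ^ m ≡ 1 [MOD m.minFac] := h.of_dvd (Nat.minFac_dvd m)
  rw [← ZMod.natCast_eq_natCast_iff] at h1 ⊢
  push_cast at h1 ⊢
  have hne : (u : ZMod m.minFac) ≠ 0 := by
    intro h0
    rw [h0, zero_pow hm0.ne'] at h1
    exact zero_ne_one h1
  have h2 := ZMod.pow_card_sub_one_eq_one hne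
  have hc : Nat.Coprime m (m.minFac - 1) :=
    Nat.coprime_of_lt_minFac (by have := hp.two_le; omega) (by have := hp.two_le; omega)
  have h3 := Nat.dvd_gcd (orderOf_dvd_of_pow_eq_one h1) (orderOf_dvd_of_pow_eq_one h2)
  rw [hc, Nat.dvd_one, orderOf_eq_one_iff] at h3
  exact h3

lemma main_s (n : ℕ) (hn : 0 < n) (m : ℕ) : 0 < m → ∀ (x y : G) (u : ℕ), y * x = x ^ u * y →
    u ^ m ≡ 1 [MOD m] → x ^ (m * n) = 1 → y ^ m = 1 → ∀ S : Multiset G,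
    (∀ g ∈ S, ∃ i j : ℕ, g = x ^ i * y ^ j) → 2 * m + 2 * (m * n) - 3 ≤ Multiset.card S →
    ∃ T ≤ S, Multiset.card T = m * n ∧ IsProductOne T := by
  induction m using Nat.strong_induction_on with
  | _ m ih =>
  intro hm x y u hxy hu hx hy S hS hcard
  have hS' : ∃ I J : G → ℕ, ∀ g ∈ S, g = x ^ I g * y ^ J g := by
    choose! I J h using hS
    exact ⟨I, J, h⟩
  obtain ⟨I, J, hIJ⟩ := hS'
  by_cases hm1 : m = 1
  · subst hm1
    rw [pow_one] at hy
    obtain ⟨T, hT, h1, h2⟩ := egz_multiset (n := n) S (fun g => (I g : ZMod n)) (by omega)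
    refine ⟨T, hT, by omega, ?_⟩
    obtain ⟨l, rfl⟩ : ∃ l : List G, (l : Multiset G) = T := Quot.exists_rep T
    refine ⟨l, rfl, ?_⟩
    obtain ⟨a, h3, h4⟩ := list_prod_form (p := n) (u := 1) (x := x) (y := y) (by simp [hy]) rfl I J l
      (fun g hg => hIJ g (Multiset.mem_of_le hT (by simpa using hg)))
    have h5 : (((l.map I).sum : ℕ) : ZMod n) = 0 := by
      rw [← h2]
      simp [Nat.cast_list_sum, Function.comp_def]
    rw [← (ZMod.natCast_eq_natCast_iff _ _ _).2 h4, ZMod.natCast_eq_zero_iff] at h5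
    obtain ⟨b, rfl⟩ := h5
    rw [one_mul] at hx
    rw [h3, hy, pow_mul, hx]
    simp
  · have hp := Nat.minFac_prime hm1
    have hu1 := u_mod hm1 hm hu
    obtain ⟨m', hmm'⟩ := Nat.minFac_dvd m
    set p := m.minFac with hpdef
    have := Fact.mk hp
    have hp2 := hp.two_le
    have hm'0 : 0 < m' := Nat.pos_of_ne_zero (by rintro rfl; omega)
    have hmn : 1 ≤ m' * n := Nat.mul_pos hm'0 hn
    have hlt : m' < m := by rw [hmm']; nlinarith
    obtain ⟨Q, hQ1, hQ2, hQ3⟩ := blocks p (3 * p - 3)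
      (fun l => ∃ i j : ℕ, l.prod = (x ^ p) ^ i * (y ^ p) ^ j) S (by
        intro S' hS' hc
        obtain ⟨T, hT, h1, h2⟩ := kemnitz_multiset (p := p) S'
          (fun g => ((I g : ZMod p), (J g : ZMod p))) (by omega)
        obtain ⟨l, rfl⟩ : ∃ l : List G, (l : Multiset G) = T := Quot.exists_rep T
        refine ⟨l, hT, by simpa using h1, ?_⟩
        obtain ⟨a, h3, h4⟩ := list_prod_form (p := p) hxy hu1 I J l
          (fun g hg => hIJ g (Multiset.mem_of_le (hT.trans hS') (by simpa using hg)))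
        have h5 : (((l.map I).sum : ℕ) : ZMod p) = 0 := by
          have := congrArg (AddMonoidHom.fst (ZMod p) (ZMod p)) h2
          rw [map_multiset_sum, Multiset.map_map] at this
          simpa [Nat.cast_list_sum, Function.comp_def] using this
        have h6 : (((l.map J).sum : ℕ) : ZMod p) = 0 := by
          have := congrArg (AddMonoidHom.snd (ZMod p) (ZMod p)) h2
          rw [map_multiset_sum, Multiset.map_map] at this
          simpa [Nat.cast_list_sum, Function.comp_def] using this
        rw [← (ZMod.natCast_eq_natCast_iff _ _ _).2 h4, ZMod.natCast_eq_zero_iff] at h5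
        rw [ZMod.natCast_eq_zero_iff] at h6
        obtain ⟨b, rfl⟩ := h5
        obtain ⟨c, hc⟩ := h6
        exact ⟨b, c, by rw [h3, hc, pow_mul, pow_mul]⟩) (2 * m' + 2 * (m' * n) - 3) (by
        refine le_trans ?_ hcard
        have e : 2 * m + 2 * (m * n) = (2 * m' + 2 * (m' * n)) * p := by
          conv_lhs => rw [hmm']
          ring
        rw [e]
        obtain ⟨K, hK⟩ : ∃ K, 2 * m' + 2 * (m' * n) = K + 3 := ⟨2 * m' + 2 * (m' * n) - 3, by omega⟩
        rw [hK, Nat.add_sub_cancel, add_mul]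
        omega)
    obtain ⟨T', hT', hT'c, l', hl', hl'p⟩ := ih m' hlt hm'0 (x ^ p) (y ^ p) (u ^ p)
      (by rw [comm_pow hxy, ← pow_mul, mul_comm])
      (by
        rw [← pow_mul, ← hmm']
        exact hu.of_dvd ⟨p, by rw [mul_comm]; exact hmm'⟩)
      (by rw [← pow_mul, ← mul_assoc, ← hmm', hx])
      (by rw [← pow_mul, ← hmm', hy])
      (Q.map List.prod)
      (by
        intro g hg
        obtain ⟨l, hl, rfl⟩ := Multiset.mem_map.1 hg
        exact (hQ2 l hl).2)
      (by rw [Multiset.card_map, hQ1])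
    subst hl'
    obtain ⟨Q', hQ', hQ'l⟩ := lift_list List.prod l' Q hT'
    refine ⟨(Q'.flatten : List G), ?_, ?_, Q'.flatten, rfl, ?_⟩
    · refine le_trans ?_ hQ3
      rw [coe_flatten_sum]
      obtain ⟨R, rfl⟩ := Multiset.le_iff_exists_add.1 hQ'
      rw [Multiset.map_add, Multiset.sum_add]
      exact Multiset.le_add_right _ _
    · rw [Multiset.coe_card, List.length_flatten]
      have : Q'.map List.length = Q'.map (fun _ => p) :=
        List.map_congr_left fun l hl => (hQ2 l (Multiset.mem_of_le hQ' (by simpa using hl))).1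
      rw [this, List.map_const', List.sum_replicate, smul_eq_mul]
      have : Q'.length = m' * n := by
        rw [← hT'c, Multiset.coe_card, ← hQ'l, List.length_map]
      rw [this]
      conv_rhs => rw [hmm']
      ring
    · rw [List.prod_flatten, hQ'l, hl'p]

lemma filter_one_prod (l : List G) [DecidableEq G] : (l.filter (fun g => g ≠ 1)).prod = l.prod := by
  induction l with
  | nil => rfl
  | cons a l ih =>
    by_cases h : a = 1
    · simp_all
    · simp_all

lemma eta_of_s (e N : ℕ) (he : 0 < e)
    (h : ∀ S : Multiset G, N + (e - 1) ≤ Multiset.card S →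
      ∃ T ≤ S, Multiset.card T = e ∧ IsProductOne T)
    (S : Multiset G) (hS : N ≤ Multiset.card S) :
    ∃ T ≤ S, T ≠ 0 ∧ Multiset.card T ≤ e ∧ IsProductOne T := by
  classical
  by_cases h1 : (1 : G) ∈ S
  · exact ⟨{1}, by simpa using h1, by simp, by rw [Multiset.card_singleton]; exact he, [1], rfl, by simp⟩
  obtain ⟨T, hT, hc, l, rfl, hl⟩ := h (S + Multiset.replicate (e - 1) 1) (by simpa using hS)
  refine ⟨((l.filter (fun g => g ≠ 1) : List G) : Multiset G), ?_, ?_, ?_, _, rfl, ?_⟩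
  · have := Multiset.filter_le_filter (fun g => g ≠ 1) hT
    rw [Multiset.filter_add, (Multiset.filter_eq_nil (s := Multiset.replicate (e - 1) (1 : G))).2,
      add_zero] at this
    · simpa using this.trans (Multiset.filter_le _ _)
    · intro a ha; simpa using Multiset.eq_of_mem_replicate ha
  · intro h0
    have h0' : ∀ a ∈ l, a = 1 := by
      intro a ha
      by_contra hne
      have : a ∈ ((l.filter (fun g => g ≠ 1) : List G) : Multiset G) := by simp [ha, hne]
      rw [h0] at this
      simp at this
    have hl1 : l = List.replicate e 1 := List.eq_replicate_iff.2 ⟨by simpa using hc, h0'⟩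
    have hcount := Multiset.count_le_of_le 1 hT
    rw [hl1, Multiset.count_add, Multiset.count_eq_zero_of_notMem h1] at hcount
    simp at hcount
    omega
  · rw [Multiset.coe_card]
    exact (List.length_filter_le _ _).trans (by simpa using hc.le)
  · rw [filter_one_prod, hl]

end groups
end Kemnitz

/-- For `G ≅ C_m ⋉_φ C_{mn}` with `e(G) = mn` (the maximal order of an element),
`η(G) ≤ 2m + mn − 2` and `s(G) ≤ 2m + 2mn − 3`. -/
theorem eta_and_s_bounds (m n : ℕ) (hm : 0 < m) (hn : 0 < n)
    (φ : Multiplicative (ZMod m) →* MulAut (Multiplicative (ZMod (m * n))))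
    (hexp : (∀ g : Multiplicative (ZMod (m * n)) ⋊[φ] Multiplicative (ZMod m),
        orderOf g ≤ m * n) ∧
      ∃ g : Multiplicative (ZMod (m * n)) ⋊[φ] Multiplicative (ZMod m),
        orderOf g = m * n) :
    (∀ S : Multiset (Multiplicative (ZMod (m * n)) ⋊[φ] Multiplicative (ZMod m)),
      2 * m + m * n - 2 ≤ Multiset.card S →
      ∃ T ≤ S, T ≠ 0 ∧ Multiset.card T ≤ m * n ∧ IsProductOne T) ∧
    (∀ S : Multiset (Multiplicative (ZMod (m * n)) ⋊[φ] Multiplicative (ZMod m)),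
      2 * m + 2 * (m * n) - 3 ≤ Multiset.card S →
      ∃ T ≤ S, Multiset.card T = m * n ∧ IsProductOne T) := by
  have hmn : 0 < m * n := Nat.mul_pos hm hn
  have : NeZero m := ⟨hm.ne'⟩
  have : NeZero (m * n) := ⟨hmn.ne'⟩
  have gen : ∀ (k : ℕ) [NeZero k] (a : Multiplicative (ZMod k)),
      a = (Multiplicative.ofAdd (1 : ZMod k)) ^ (Multiplicative.toAdd a).val := by
    intro k _ a
    rw [← ofAdd_nsmul, nsmul_one, ZMod.natCast_zmod_val, ofAdd_toAdd]
  have key : ∀ S : Multiset (Multiplicative (ZMod (m * n)) ⋊[φ] Multiplicative (ZMod m)),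
      2 * m + 2 * (m * n) - 3 ≤ Multiset.card S →
      ∃ T ≤ S, Multiset.card T = m * n ∧ IsProductOne T := by
    intro S hS
    set x : Multiplicative (ZMod (m * n)) ⋊[φ] Multiplicative (ZMod m) :=
      SemidirectProduct.inl (Multiplicative.ofAdd (1 : ZMod (m * n))) with hx
    set y : Multiplicative (ZMod (m * n)) ⋊[φ] Multiplicative (ZMod m) :=
      SemidirectProduct.inr (Multiplicative.ofAdd (1 : ZMod m)) with hy
    have hox : orderOf x = m * n := by
      rw [hx, orderOf_injective _ SemidirectProduct.inl_injective, orderOf_ofAdd_eq_addOrderOf,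
        ZMod.addOrderOf_one]
    have hym : y ^ m = 1 := by
      rw [hy, ← map_pow, ← ofAdd_nsmul]
      simp
    obtain ⟨u, hu⟩ : ∃ u : ℕ, y * x = x ^ u * y := by
      refine ⟨(Multiplicative.toAdd (φ (Multiplicative.ofAdd (1 : ZMod m))
        (Multiplicative.ofAdd (1 : ZMod (m * n))))).val, ?_⟩
      · have h1 := SemidirectProduct.inl_aut (φ := φ) (Multiplicative.ofAdd (1 : ZMod m))
          (Multiplicative.ofAdd (1 : ZMod (m * n)))
        rw [gen (m * n) (φ _ _), map_pow, map_inv] at h1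
        rw [hx, hy, h1, inv_mul_cancel_right]
    refine Kemnitz.main_s n hn m hm x y u hu ?_ ?_ hym S ?_ hS
    · have h1 := Kemnitz.comm_pow hu m 1
      rw [hym, one_mul, mul_one, mul_one, pow_eq_pow_iff_modEq, hox] at h1
      exact (h1.of_dvd ⟨n, rfl⟩).symm
    · exact orderOf_dvd_iff_pow_eq_one.1 hox.dvd
    · intro g _
      refine ⟨(Multiplicative.toAdd g.left).val, (Multiplicative.toAdd g.right).val, ?_⟩
      rw [hx, hy, ← map_pow SemidirectProduct.inl, ← map_pow SemidirectProduct.inr, ← gen, ← gen,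
        SemidirectProduct.inl_left_mul_inr_right]
  refine ⟨fun S hS => ?_, key⟩
  exact Kemnitz.eta_of_s (m * n) (2 * m + m * n - 2) hmn
    (fun S' hS' => key S' (by omega)) S hS
end

section
/- For any positive integers m and k and any module V of the group C_m ⋉_φ C_m over a field F whose characteristic does not divide m², the generalized Noether number satisfies β_k(C_m ⋉_φ C_m, V) ≤ km + m − 1. -/
open MvPolynomial

/-- The action of a group element on polynomial functions, induced by a linear
representation `ρ` on the variables. -/
noncomputable def polyAct {F : Type*} [Field F] {G : Type*} [Group G] {d : ℕ}
    (ρ : G →* Matrix.GeneralLinearGroup (Fin d) F) (g : G)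
    (f : MvPolynomial (Fin d) F) : MvPolynomial (Fin d) F :=
  MvPolynomial.aeval (fun i => ∑ j, ((ρ g).val i j) • (MvPolynomial.X j)) f

/-- A polynomial invariant of the representation `ρ`. -/
def IsPolyInvariant {F : Type*} [Field F] {G : Type*} [Group G] {d : ℕ}
    (ρ : G →* Matrix.GeneralLinearGroup (Fin d) F)
    (f : MvPolynomial (Fin d) F) : Prop :=
  ∀ g : G, polyAct ρ g f = f

/-- `β_k(G, V) ≤ s`: every invariant with zero constant term lies in the span of
invariants of degree `≤ s` together with products of at least `k + 1` invariants
with zero constant term (i.e. the ideal power `((F[V]^G)_+)^{k+1}`). -/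
def BetaKBoundLe {F : Type*} [Field F] {G : Type*} [Group G] {d : ℕ}
    (ρ : G →* Matrix.GeneralLinearGroup (Fin d) F) (k s : ℕ) : Prop :=
  ∀ f : MvPolynomial (Fin d) F, IsPolyInvariant ρ f → MvPolynomial.constantCoeff f = 0 →
    f ∈ Submodule.span F
      ({h : MvPolynomial (Fin d) F |
          IsPolyInvariant ρ h ∧ MvPolynomial.constantCoeff h = 0 ∧ h.totalDegree ≤ s} ∪
       {h : MvPolynomial (Fin d) F | ∃ l : List (MvPolynomial (Fin d) F),
          k + 1 ≤ l.length ∧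
          (∀ x ∈ l, IsPolyInvariant ρ x ∧ MvPolynomial.constantCoeff x = 0) ∧
          l.prod = h})

/-! ### Number theory -/

lemma aux_pow_gcd (v a b n : ℕ) (ha : v ^ a ≡ 1 [MOD n]) (hb : v ^ b ≡ 1 [MOD n]) (c : ℕ)
    (hc : Nat.gcd a b ∣ c) : v ^ c ≡ 1 [MOD n] := by
  rw [← ZMod.natCast_eq_natCast_iff] at *
  push_cast at *
  have h1 := orderOf_dvd_of_pow_eq_one ha
  have h2 := orderOf_dvd_of_pow_eq_one hb
  exact orderOf_dvd_iff_pow_eq_one.1 ((Nat.dvd_gcd h1 h2).trans hc)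

lemma aux_nt1 (n p v : ℕ) (hn : 0 < n) (hp : p.Prime) (hmax : ∀ q ∈ n.primeFactors, q ≤ p)
    (hv : v ^ (n * p) ≡ 1 [MOD n * p]) : v ^ n ≡ 1 [MOD n] := by
  have hv' : v ^ (n * p) ≡ 1 [MOD n] := hv.of_mul_right p
  have hcop : Nat.Coprime v n := by
    have h1 : Nat.Coprime (v ^ (n * p)) n := by
      have := hv'.gcd_eq
      simpa [Nat.Coprime] using this
    exact Nat.Coprime.coprime_dvd_left (dvd_pow_self v (Nat.mul_pos hn hp.pos).ne') h1
  refine aux_pow_gcd v _ _ n hv' (Nat.ModEq.pow_totient hcop) n ?_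
  have hc : Nat.Coprime p (∏ q ∈ n.primeFactors, (q - 1)) := by
    refine Nat.Coprime.prod_right fun q hq => ?_
    have h2 := (Nat.prime_of_mem_primeFactors hq).two_le
    have h3 := hmax q hq
    exact Nat.coprime_of_lt_prime (by omega) (by omega) hp
  have : Nat.gcd (n * p) (n.totient) ∣ Nat.gcd (n * p) (n * ∏ q ∈ n.primeFactors, (q - 1)) := by
    refine Nat.dvd_gcd (Nat.gcd_dvd_left _ _) ((Nat.gcd_dvd_right _ _).trans ?_)
    rw [← Nat.totient_mul_prod_primeFactors]
    exact dvd_mul_right _ _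
  rwa [Nat.gcd_mul_left, hc.gcd_eq_one, mul_one] at this

lemma aux_nt2 (n p v : ℕ) (hn : 0 < n) (hp : p.Prime)
    (hv : v ^ (n * p) ≡ 1 [MOD n * p]) : v ^ n ≡ 1 [MOD p] := by
  have hv' : v ^ (n * p) ≡ 1 [MOD p] := hv.of_mul_left n
  have hcop : Nat.Coprime v p := by
    have h1 : Nat.Coprime (v ^ (n * p)) p := by
      have := hv'.gcd_eq
      simpa [Nat.Coprime] using this
    exact Nat.Coprime.coprime_dvd_left (dvd_pow_self v (Nat.mul_pos hn hp.pos).ne') h1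
  refine aux_pow_gcd v _ _ p hv' (Nat.ModEq.pow_totient hcop) n ?_
  rw [Nat.totient_prime hp]
  have hc : Nat.Coprime p (p - 1) := by
    have := hp.two_le
    exact Nat.coprime_of_lt_prime (by omega) (by omega) hp
  rw [Nat.gcd_comm, Nat.Coprime.gcd_mul_right_cancel_right n hc]
  exact Nat.gcd_dvd_right _ _

/-! ### Zero-sum combinatorics -/

/-- Olson's bound for elementary abelian groups. -/
lemma olson {ι : Type*} (p : ℕ) (hp : p.Prime) (r : ℕ) (e : Fin r → ι → ℕ) (S : Finset ι)
    (hS : r * (p - 1) < S.card) :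
    ∃ T ⊆ S, T.Nonempty ∧ ∀ j, p ∣ ∑ i ∈ T, e j i := by
  classical
  have := Fact.mk hp
  let f : Fin r → MvPolynomial S (ZMod p) := fun j =>
    ∑ i : S, C (e j i : ZMod p) * X i ^ (p - 1)
  have hdeg : (∑ j, (f j).totalDegree) < Fintype.card S := by
    calc (∑ j, (f j).totalDegree) ≤ ∑ j : Fin r, (p - 1) := by
          refine Finset.sum_le_sum fun j _ => ?_
          refine totalDegree_finsetSum_le fun i _ => ?_
          refine (totalDegree_mul _ _).trans ?_
          rw [totalDegree_C, totalDegree_X_pow, zero_add]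
      _ < _ := by simpa using hS
  have hdvd : p ∣ Fintype.card { x : S → ZMod p // ∀ j, eval x (f j) = 0 } := by
    convert char_dvd_card_solutions_of_fintype_sum_lt p hdeg
  have hp1 : p - 1 ≠ 0 := by have := hp.two_le; omega
  let z : { x : S → ZMod p // ∀ j, eval x (f j) = 0 } := ⟨0, fun j => by simp [f, hp1]⟩
  have hcard : 1 < Fintype.card { x : S → ZMod p // ∀ j, eval x (f j) = 0 } := by
    have hpos : 0 < Fintype.card { x : S → ZMod p // ∀ j, eval x (f j) = 0 } :=
      Fintype.card_pos_iff.2 ⟨z⟩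
    exact hp.one_lt.trans_le (Nat.le_of_dvd hpos hdvd)
  obtain ⟨⟨x, hx⟩, hne⟩ := Fintype.exists_ne_of_one_lt_card hcard z
  have hx0 : x ≠ 0 := fun h => hne (Subtype.ext h)
  obtain ⟨i0, hi0⟩ := Function.ne_iff.1 hx0
  refine ⟨(Finset.univ.filter fun i : S => x i ≠ 0).map (Function.Embedding.subtype _), ?_, ?_, ?_⟩
  · intro i hi
    simp only [Finset.mem_map, Function.Embedding.coe_subtype] at hi
    obtain ⟨a, _, rfl⟩ := hi
    exact a.2
  · exact ⟨i0, by simpa using hi0⟩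
  · intro j
    rw [← ZMod.natCast_eq_zero_iff, Finset.sum_map]
    have := hx j
    simp only [f, map_sum, map_mul, eval_C, map_pow, eval_X] at this
    rw [Nat.cast_sum, Finset.sum_filter]
    refine Eq.trans ?_ this
    refine Finset.sum_congr rfl fun i _ => ?_
    by_cases h : x i = 0
    · simp [h, hp1]
    · simp [h, ZMod.pow_card_sub_one_eq_one h]

/-- the two-coordinate zero-sum predicate -/
def ZS {ι : Type*} (p : ℕ) (e e' : ι → ℕ) (T : Finset ι) : Prop :=
  p ∣ ∑ i ∈ T, e i ∧ p ∣ ∑ i ∈ T, e' i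

lemma ZS.sdiff {ι : Type*} [DecidableEq ι] {p : ℕ} {e e' : ι → ℕ} {S T : Finset ι}
    (hS : ZS p e e' S) (hT : ZS p e e' T) (h : T ⊆ S) : ZS p e e' (S \ T) := by
  constructor
  · have := hS.1
    rw [← Finset.sum_sdiff h] at this
    exact (Nat.dvd_add_left hT.1).1 this
  · have := hS.2
    rw [← Finset.sum_sdiff h] at this
    exact (Nat.dvd_add_left hT.2).1 this

lemma olson2 {ι : Type*} (p : ℕ) (hp : p.Prime) (e e' : ι → ℕ) (S : Finset ι)
    (hS : 2 * p ≤ S.card + 1) :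
    ∃ T ⊆ S, T.Nonempty ∧ T.card + 1 ≤ 2 * p ∧ ZS p e e' T := by
  have := hp.two_le
  obtain ⟨U, hU, hUc⟩ := Finset.exists_subset_card_eq (s := S) (n := 2 * p - 1) (by omega)
  obtain ⟨T, hT, hTn, h⟩ := olson p hp 2 ![e, e'] U (by omega)
  refine ⟨T, hT.trans hU, hTn, ?_, by simpa using h 0, by simpa using h 1⟩
  have := Finset.card_le_card hT
  omega

lemma short_zs {ι : Type*} (p : ℕ) (hp : p.Prime) (e e' : ι → ℕ) (S : Finset ι)
    (hS : 3 * p ≤ S.card + 2) :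
    ∃ T ⊆ S, T.Nonempty ∧ T.card ≤ p ∧ ZS p e e' T := by
  classical
  have := hp.two_le
  obtain ⟨U, hU, hUc⟩ := Finset.exists_subset_card_eq (s := S) (n := 3 * p - 2) (by omega)
  obtain ⟨T, hT, hTn, h⟩ := olson p hp 3 ![e, e', fun _ => 1] U (by omega)
  have hz : ZS p e e' T := ⟨by simpa using h 0, by simpa using h 1⟩
  have hc : p ∣ T.card := by simpa using h 2
  have hle := Finset.card_le_card hT
  have hpos := hTn.card_pos
  obtain ⟨c, hc⟩ := hc
  have hc3 : c < 3 := by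
    by_contra hcon
    have : p * 3 ≤ p * c := Nat.mul_le_mul_left _ (by omega)
    omega
  interval_cases c
  · omega
  · exact ⟨T, hT.trans hU, hTn, by omega, hz⟩
  · obtain ⟨A, hA, hAn, hAc, hAz⟩ := olson2 p hp e e' T (by omega)
    by_cases hAp : A.card ≤ p
    · exact ⟨A, (hA.trans hT).trans hU, hAn, hAp, hAz⟩
    · have hcs := Finset.card_sdiff_add_card_eq_card hA
      refine ⟨T \ A, (Finset.sdiff_subset.trans hT).trans hU, ?_, by omega, hz.sdiff hAz hA⟩
      rw [← Finset.card_pos]; omega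

lemma prod_mem_pow_of_zs {ι K P : Type*} [Field K] [CommRing P] [Algebra K P]
    (p : ℕ) (hp : p.Prime) (e e' : ι → ℕ) (x : ι → P) (J : Submodule K P)
    (hJ : ∀ T : Finset ι, T.Nonempty → ZS p e e' T → ∏ i ∈ T, x i ∈ J) (s : ℕ) :
    ∀ S : Finset ι, ZS p e e' S → (s + 1) * p ≤ S.card → ∏ i ∈ S, x i ∈ J ^ (s + 1) := by
  classical
  have := hp.two_le
  induction s with
  | zero =>
    intro S hS hc
    rw [zero_add, pow_one]
    exact hJ S (Finset.card_pos.1 (by omega)) hS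
  | succ s ih =>
    intro S hS hc
    have key : ∃ T ⊆ S, T.Nonempty ∧ (s + 1) * p ≤ (S \ T).card + (if s = 0 then p - 1 else 0) ∧
        ZS p e e' T := by
      by_cases hs : s = 0
      · subst hs
        obtain ⟨T, h1, h2, h3, h4⟩ := olson2 p hp e e' S (by omega)
        have hcs := Finset.card_sdiff_add_card_eq_card h1
        refine ⟨T, h1, h2, ?_, h4⟩
        rw [if_pos rfl]; omega
      · obtain ⟨T, h1, h2, h3, h4⟩ := short_zs p hp e e' S (by
          have : 3 * p ≤ (s + 1 + 1) * p := Nat.mul_le_mul_right _ (by omega)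
          omega)
        have hcs := Finset.card_sdiff_add_card_eq_card h1
        refine ⟨T, h1, h2, ?_, h4⟩
        rw [if_neg hs]
        have : (s + 1 + 1) * p = (s + 1) * p + p := by ring
        omega
    obtain ⟨T, h1, h2, h3, h4⟩ := key
    rw [← Finset.prod_sdiff h1, pow_succ]
    refine Submodule.mul_mem_mul ?_ (hJ T h2 h4)
    by_cases hs : s = 0
    · subst hs
      rw [zero_add, pow_one]
      refine hJ _ (Finset.card_pos.1 ?_) (hS.sdiff h4 h1)
      simp at h3; omega
    · rw [if_neg hs] at h3
      exact ih _ (hS.sdiff h4 h1) (by omega)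

/-! ### Eigen-decomposition -/

lemma shift_sum {M : Type*} [AddCommMonoid M] (g : ℕ → M) (p : ℕ) (h : g p = g 0) :
    ∑ l ∈ Finset.range p, g (l + 1) = ∑ l ∈ Finset.range p, g l := by
  cases p with
  | zero => simp
  | succ q => rw [Finset.sum_range_succ, Finset.sum_range_succ', h]

lemma mem_span_eigen {K P : Type*} [Field K] [AddCommGroup P] [Module K P]
    (p : ℕ) (hp : 1 < p) (hpK : (p : K) ≠ 0) (ζ : K) (hζ : IsPrimitiveRoot ζ p)
    (A : Module.End K P) (M : Submodule K P) (hM : ∀ x ∈ M, A x ∈ M)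
    (x : P) (hx : x ∈ M) (hA : (A ^ p) x = x) :
    x ∈ Submodule.span K {y | y ∈ M ∧ ∃ e : ℕ, A y = ζ ^ e • y} := by
  have hpow : ∀ l, (A ^ l) x ∈ M := by
    intro l
    induction l with
    | zero => simpa
    | succ l ih => rw [pow_succ']; exact hM _ ih
  let c : ℕ → P := fun i => ∑ l ∈ Finset.range p, ζ ^ (i * l) • (A ^ l) x
  have hc : ∀ i, c i ∈ Submodule.span K {y | y ∈ M ∧ ∃ e : ℕ, A y = ζ ^ e • y} := by
    intro i
    refine Submodule.subset_span ⟨Submodule.sum_mem _ fun l _ => M.smul_mem _ (hpow l),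
      i * (p - 1), ?_⟩
    have h1 : ζ ^ i • A (c i) = c i := by
      simp only [c, map_sum, Finset.smul_sum, map_smul]
      rw [← shift_sum (fun l => ζ ^ (i * l) • (A ^ l) x) p]
      · refine Finset.sum_congr rfl fun l _ => ?_
        rw [smul_smul, ← pow_add, pow_succ', Module.End.mul_apply]
        congr 2
        ring
      · simp only [hA, mul_zero, pow_zero, Module.End.one_apply]
        rw [mul_comm, pow_mul, hζ.pow_eq_one, one_pow]
    conv_rhs => rw [← h1]
    rw [smul_smul, ← pow_add]
    have : i * (p - 1) + i = p * i := by
      obtain ⟨q, rfl⟩ : ∃ q, p = q + 1 := ⟨p - 1, by omega⟩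
      simp; ring
    rw [this, pow_mul, hζ.pow_eq_one, one_pow, one_smul]
  have hsum : ∑ i ∈ Finset.range p, c i = (p : K) • x := by
    simp only [c]
    rw [Finset.sum_comm]
    simp_rw [← Finset.sum_smul]
    rw [Finset.sum_eq_single 0]
    · simp
    · intro l hl hl0
      have hne : ζ ^ l ≠ 1 := hζ.pow_ne_one_of_pos_of_lt hl0 (Finset.mem_range.1 hl)
      have : ∑ i ∈ Finset.range p, ζ ^ (i * l) = 0 := by
        have h2 := mul_geom_sum (ζ ^ l) p
        rw [← pow_mul, mul_comm l p, pow_mul, hζ.pow_eq_one, one_pow, sub_self] at h2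
        have h3 := (mul_eq_zero.1 h2).resolve_left (sub_ne_zero.2 hne)
        rw [← h3]
        refine Finset.sum_congr rfl fun i _ => ?_
        rw [← pow_mul, mul_comm]
      rw [this, zero_smul]
    · intro h; exact absurd (Finset.mem_range.2 (by omega)) h
  have : x = (p : K)⁻¹ • ∑ i ∈ Finset.range p, c i := by
    rw [hsum, smul_smul, inv_mul_cancel₀ hpK, one_smul]
  rw [this]
  exact Submodule.smul_mem _ _ (Submodule.sum_mem _ fun i _ => hc i)

/-- invariants of two algebra endomorphisms inside a submodule -/
def invSub {K P : Type*} [Field K] [CommRing P] [Algebra K P] (I : Submodule K P)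
    (α β : P →ₐ[K] P) : Submodule K P where
  carrier := {x | x ∈ I ∧ α x = x ∧ β x = x}
  zero_mem' := ⟨I.zero_mem, map_zero _, map_zero _⟩
  add_mem' := fun {x y} hx hy => ⟨I.add_mem hx.1 hy.1, by rw [map_add, hx.2.1, hy.2.1],
    by rw [map_add, hx.2.2, hy.2.2]⟩
  smul_mem' := fun c x hx => ⟨I.smul_mem c hx.1, by rw [map_smul, hx.2.1],
    by rw [map_smul, hx.2.2]⟩

lemma mem_invSub {K P : Type*} [Field K] [CommRing P] [Algebra K P] {I : Submodule K P}
    {α β : P →ₐ[K] P} {x : P} : x ∈ invSub I α β ↔ x ∈ I ∧ α x = x ∧ β x = x := Iff.rfl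

lemma prod_mem_of_mul_le {ι K P : Type*} [Field K] [CommRing P] [Algebra K P] (I : Submodule K P)
    (hI : I * I ≤ I) (x : ι → P) (hx : ∀ i, x i ∈ I) (T : Finset ι) (hT : T.Nonempty) :
    ∏ i ∈ T, x i ∈ I := by
  classical
  induction hT using Finset.Nonempty.cons_induction with
  | singleton a => simpa using hx a
  | cons a s h hs ih =>
    rw [Finset.prod_cons]
    exact hI (Submodule.mul_mem_mul (hx a) ih)

lemma prod_eigen {ι K P : Type*} [Field K] [CommRing P] [Algebra K P] (a : P →ₐ[K] P) (ζ : K)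
    (x : ι → P) (e : ι → ℕ) (h : ∀ i, a (x i) = ζ ^ e i • x i) (T : Finset ι) :
    a (∏ i ∈ T, x i) = ζ ^ (∑ i ∈ T, e i) • ∏ i ∈ T, x i := by
  rw [map_prod, Finset.prod_congr rfl fun i _ => h i, Finset.prod_smul, Finset.prod_pow_eq_pow_sum]

/-- unnormalised averaging operator -/
noncomputable def avg {K P : Type*} [Field K] [CommRing P] [Algebra K P] (a : P →ₐ[K] P) (p : ℕ) :
    P →ₗ[K] P := ∑ l ∈ Finset.range p, a.toLinearMap ^ l

lemma avg_eigen {K P : Type*} [Field K] [CommRing P] [Algebra K P] (a : P →ₐ[K] P) (p : ℕ)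
    (μ : K) (x : P) (h : a x = μ • x) :
    avg a p x = (∑ l ∈ Finset.range p, μ ^ l) • x := by
  have : ∀ l, (a.toLinearMap ^ l) x = μ ^ l • x := by
    intro l
    induction l with
    | zero => simp
    | succ l ih => rw [pow_succ', Module.End.mul_apply, ih, map_smul, AlgHom.toLinearMap_apply, h,
        smul_smul, pow_succ]
  rw [avg, LinearMap.sum_apply, Finset.sum_smul]
  exact Finset.sum_congr rfl fun l _ => this l

open scoped Pointwise in
lemma elementary_step {K P : Type*} [Field K] [CommRing P] [Algebra K P]
    (p : ℕ) (hp : p.Prime) (hpK : (p : K) ≠ 0) (ζ : K) (hζ : IsPrimitiveRoot ζ p)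
    (a b : P →ₐ[K] P) (I : Submodule K P) (hI : I * I ≤ I)
    (ha : ∀ x ∈ I, a x ∈ I) (hb : ∀ x ∈ I, b x ∈ I) (hab : ∀ x ∈ I, a (b x) = b (a x))
    (hap : ∀ x ∈ I, (a ^ p) x = x) (hbp : ∀ x ∈ I, (b ^ p) x = x)
    (s t : ℕ) (hst : (s + 1) * p ≤ t) (f : P) (hf : f ∈ I ^ t) (haf : a f = f) (hbf : b f = f) :
    f ∈ (invSub I a b) ^ (s + 1) := by
  have hlin : ∀ (c : P →ₐ[K] P) (n : ℕ) (x : P), (c.toLinearMap ^ n) x = (c ^ n) x := by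
    intro c n
    induction n with
    | zero => intro x; simp
    | succ n ih => intro x; rw [pow_succ, pow_succ, Module.End.mul_apply, ih]; rfl
  let E : Set P := {y | y ∈ I ∧ ∃ e e' : ℕ, a y = ζ ^ e • y ∧ b y = ζ ^ e' • y}
  have hspan : I ≤ Submodule.span K E := by
    intro x hx
    have h1 := mem_span_eigen p hp.one_lt hpK ζ hζ a.toLinearMap I ha x hx
      (by rw [hlin]; exact hap x hx)
    refine Submodule.span_le.2 ?_ h1
    rintro y ⟨hy, e, hye⟩
    let M : Submodule K P :=
      { carrier := {z | z ∈ I ∧ a z = ζ ^ e • z}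
        zero_mem' := ⟨I.zero_mem, by simp⟩
        add_mem' := fun {u w} hu hw => ⟨I.add_mem hu.1 hw.1, by
          rw [map_add, hu.2, hw.2, smul_add]⟩
        smul_mem' := fun c u hu => ⟨I.smul_mem c hu.1, by
          rw [map_smul, hu.2, smul_comm]⟩ }
    have h2 := mem_span_eigen p hp.one_lt hpK ζ hζ b.toLinearMap M
      (fun z hz => ⟨hb z hz.1, by
        change a (b z) = ζ ^ e • b z
        rw [hab z hz.1, hz.2, map_smul]⟩) y ⟨hy, hye⟩
      (by rw [hlin]; exact hbp y hy)
    refine Submodule.span_mono ?_ h2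
    rintro z ⟨hz, e', hz'⟩
    exact ⟨hz.1, e, e', hz.2, hz'⟩
  have hf1 : f ∈ Submodule.span K (E ^ t) := by
    rw [← Submodule.span_pow]
    exact pow_le_pow_left' hspan t hf
  have hproj : ∀ g ∈ Submodule.span K (E ^ t),
      avg b p (avg a p g) ∈ (invSub I a b) ^ (s + 1) := by
    intro g hg
    induction hg using Submodule.span_induction with
    | zero => simp
    | add x y _ _ hx hy => rw [map_add, map_add]; exact Submodule.add_mem _ hx hy
    | smul c x _ hx => rw [map_smul, map_smul]; exact Submodule.smul_mem _ c hx
    | mem g hg =>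
      obtain ⟨w, rfl⟩ := Set.mem_pow.1 hg
      rw [List.prod_ofFn]
      have hwI : ∀ i, (w i : P) ∈ I := fun i => (w i).2.1
      choose e e' hea heb using fun i => (w i).2.2
      have hzs : ∀ T : Finset (Fin t), T.Nonempty → ZS p e e' T →
          ∏ i ∈ T, (w i : P) ∈ invSub I a b := by
        intro T hT hz
        refine ⟨prod_mem_of_mul_le I hI _ hwI T hT, ?_, ?_⟩
        · rw [prod_eigen a ζ _ e hea, (hζ.pow_eq_one_iff_dvd _).2 hz.1, one_smul]
        · rw [prod_eigen b ζ _ e' heb, (hζ.pow_eq_one_iff_dvd _).2 hz.2, one_smul]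
      have hA := prod_eigen a ζ _ e hea Finset.univ
      have hB := prod_eigen b ζ _ e' heb Finset.univ
      rw [avg_eigen a p _ _ hA, map_smul, avg_eigen b p _ _ hB, smul_smul]
      have hgeom : ∀ n : ℕ, ¬ p ∣ n → ∑ l ∈ Finset.range p, (ζ ^ n) ^ l = 0 := by
        intro n hn
        have hne : ζ ^ n ≠ 1 := fun h => hn ((hζ.pow_eq_one_iff_dvd _).1 h)
        have h2 := mul_geom_sum (ζ ^ n) p
        rw [← pow_mul, mul_comm n p, pow_mul, hζ.pow_eq_one, one_pow, sub_self] at h2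
        exact (mul_eq_zero.1 h2).resolve_left (sub_ne_zero.2 hne)
      by_cases hz : ZS p e e' Finset.univ
      · refine Submodule.smul_mem _ _ ?_
        exact prod_mem_pow_of_zs p hp e e' _ _ hzs s Finset.univ hz (by simpa using hst)
      · have : (∑ l ∈ Finset.range p, (ζ ^ ∑ i, e i) ^ l) *
            (∑ l ∈ Finset.range p, (ζ ^ ∑ i, e' i) ^ l) = 0 := by
          rw [ZS, not_and_or] at hz
          rcases hz with hz | hz
          · rw [hgeom _ hz, zero_mul]
          · rw [hgeom _ hz, mul_zero]
        rw [this, zero_smul]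
        exact Submodule.zero_mem _
  have h := hproj f hf1
  rw [avg_eigen a p 1 f (by rw [haf, one_smul]), map_smul,
    avg_eigen b p 1 f (by rw [hbf, one_smul]), smul_smul] at h
  simp only [one_pow, Finset.sum_const, Finset.card_range, nsmul_eq_mul, mul_one] at h
  have hpp : (p : K) * p ≠ 0 := mul_ne_zero hpK hpK
  have h3 := Submodule.smul_mem _ ((p : K) * p)⁻¹ h
  rwa [smul_smul, inv_mul_cancel₀ hpp, one_smul] at h3

/-! ### The relative main theorem -/

section rel
variable {K P : Type*} [Field K] [CommRing P] [Algebra K P]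

lemma pow_fix (α : P →ₐ[K] P) (x : P) (h : α x = x) (n : ℕ) : (α ^ n) x = x := by
  induction n with
  | zero => simp
  | succ n ih => rw [pow_succ, AlgHom.mul_apply, h, ih]

lemma pow_modEq (α : P →ₐ[K] P) (x : P) (m : ℕ) (h : (α ^ m) x = x) (i j : ℕ)
    (hij : i ≡ j [MOD m]) : (α ^ i) x = (α ^ j) x := by
  have key : ∀ i, (α ^ i) x = (α ^ (i % m)) x := by
    intro i
    conv_lhs => rw [← Nat.mod_add_div i m, pow_add, pow_mul, AlgHom.mul_apply, pow_fix _ x h]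
  rw [key i, key j, hij]

lemma pow_stable (α : P →ₐ[K] P) (I : Submodule K P) (h : ∀ x ∈ I, α x ∈ I) (n : ℕ) :
    ∀ x ∈ I, (α ^ n) x ∈ I := by
  induction n with
  | zero => intro x hx; simpa using hx
  | succ n ih => intro x hx; rw [pow_succ, AlgHom.mul_apply]; exact ih _ (h x hx)

lemma comm_one (α β : P →ₐ[K] P) (I : Submodule K P) (v : ℕ)
    (hα : ∀ x ∈ I, α x ∈ I) (h : ∀ x ∈ I, β (α x) = (α ^ v) (β x)) (i : ℕ) :
    ∀ x ∈ I, β ((α ^ i) x) = (α ^ (v * i)) (β x) := by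
  induction i with
  | zero => intro x _; simp
  | succ i ih =>
    intro x hx
    rw [pow_succ, AlgHom.mul_apply, ih _ (hα x hx), h x hx, ← AlgHom.mul_apply, ← pow_add]
    congr 2

lemma comm_pow (α β : P →ₐ[K] P) (I : Submodule K P) (v : ℕ)
    (hα : ∀ x ∈ I, α x ∈ I) (hβ : ∀ x ∈ I, β x ∈ I)
    (h : ∀ x ∈ I, β (α x) = (α ^ v) (β x)) (j : ℕ) :
    ∀ i, ∀ x ∈ I, (β ^ j) ((α ^ i) x) = (α ^ (v ^ j * i)) ((β ^ j) x) := by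
  induction j with
  | zero => intro i x _; simp
  | succ j ih =>
    intro i x hx
    rw [pow_succ β, AlgHom.mul_apply, comm_one α β I v hα h i x hx, ih _ _ (hβ x hx),
      AlgHom.mul_apply]
    congr 2
    ring

theorem rel_main [IsAlgClosed K] (α β : P →ₐ[K] P) (v : ℕ) (m : ℕ) :
    ∀ (I : Submodule K P), 0 < m → (m : K) ≠ 0 → v ^ m ≡ 1 [MOD m] → I * I ≤ I →
    (∀ x ∈ I, α x ∈ I) → (∀ x ∈ I, β x ∈ I) →
    (∀ x ∈ I, (α ^ m) x = x) → (∀ x ∈ I, (β ^ m) x = x) →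
    (∀ x ∈ I, β (α x) = (α ^ v) (β x)) →
    ∀ (k t : ℕ) (f : P), (k + 1) * m ≤ t → f ∈ I ^ t → α f = f → β f = f →
    f ∈ (invSub I α β) ^ (k + 1) := by
  induction m using Nat.strong_induction_on with
  | _ m ih =>
  intro I hm hmK hv hI hα hβ hαm hβm hrel k t f hkt hf hαf hβf
  by_cases hm1 : m = 1
  · subst hm1
    have hle : I ≤ invSub I α β := fun x hx =>
      ⟨hx, by simpa using hαm x hx, by simpa using hβm x hx⟩
    refine pow_le_pow_left' hle (k + 1) ?_
    have hmono : ∀ n, I ^ (k + 1 + n) ≤ I ^ (k + 1) := by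
      intro n
      induction n with
      | zero => exact le_rfl
      | succ n ihn =>
        refine le_trans ?_ ihn
        rw [← add_assoc, pow_succ, show k + 1 + n = (k + n) + 1 by ring, pow_succ, mul_assoc]
        exact mul_le_mul' le_rfl hI
    obtain ⟨n, rfl⟩ : ∃ n, t = k + 1 + n := ⟨t - (k + 1), by omega⟩
    exact hmono n hf
  · have hne : m.primeFactors.Nonempty := Nat.nonempty_primeFactors.2 (by omega)
    obtain ⟨p, hpm, hmax⟩ := m.primeFactors.exists_max_image id hne
    have hp := Nat.prime_of_mem_primeFactors hpm
    obtain ⟨n, hn⟩ := Nat.dvd_of_mem_primeFactors hpm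
    rw [mul_comm] at hn
    subst hn
    have hn0 : 0 < n := Nat.pos_of_mul_pos_right hm
    have hnK : (n : K) ≠ 0 := fun h => hmK (by push_cast; rw [h, zero_mul])
    have hpK : (p : K) ≠ 0 := fun h => hmK (by push_cast; rw [h, mul_zero])
    have hlt : n < n * p := by have := hp.two_le; nlinarith
    have hv1 := aux_nt1 n p v hn0 hp (fun q hq => hmax q
      (Nat.primeFactors_mono (dvd_mul_right n p) hm.ne' hq)) hv
    have hv2 := aux_nt2 n p v hn0 hp hv
    have : NeZero (p : K) := ⟨hpK⟩
    obtain ⟨ζ, hζ⟩ := HasEnoughRootsOfUnity.exists_primitiveRoot K p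
    have hstep := elementary_step p hp hpK ζ hζ (α ^ n) (β ^ n) I hI (pow_stable α I hα n)
      (pow_stable β I hβ n) (fun x hx => by
        rw [comm_pow α β I v hα hβ hrel n n x hx]
        refine pow_modEq α _ _ (hαm _ (pow_stable β I hβ n x hx)) _ _ ?_
        have := hv2.symm.mul_left' n
        rwa [mul_one, mul_comm n (v ^ n)] at this)
      (fun x hx => by rw [← pow_mul]; exact hαm x hx)
      (fun x hx => by rw [← pow_mul]; exact hβm x hx)
      ((k + 1) * n - 1) t (by
        have : 0 < (k + 1) * n := by positivity
        rw [Nat.sub_add_cancel this, mul_assoc]; exact hkt) f hf (pow_fix α f hαf n)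
      (pow_fix β f hβf n)
    have hpos : 0 < (k + 1) * n := by positivity
    rw [Nat.sub_add_cancel hpos] at hstep
    have hfin := ih n hlt (invSub I (α ^ n) (β ^ n)) hn0 hnK hv1 ?_ ?_ ?_
      (fun x hx => hx.2.1) (fun x hx => hx.2.2) (fun x hx => hrel x hx.1) k _ f le_rfl hstep
      hαf hβf
    · have hle : invSub (invSub I (α ^ n) (β ^ n)) α β ≤ invSub I α β :=
        fun x hx => ⟨hx.1.1, hx.2⟩
      exact pow_le_pow_left' hle (k + 1) hfin
    · refine Submodule.mul_le.2 fun x hx y hy => ⟨hI (Submodule.mul_mem_mul hx.1 hy.1), ?_, ?_⟩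
      · rw [map_mul, hx.2.1, hy.2.1]
      · rw [map_mul, hx.2.2, hy.2.2]
    · rintro x ⟨hx, hx1, hx2⟩
      refine ⟨hα x hx, ?_, ?_⟩
      · rw [← AlgHom.mul_apply, ← pow_succ, pow_succ', AlgHom.mul_apply, hx1]
      · have := comm_pow α β I v hα hβ hrel n 1 x hx
        rw [pow_one, hx2, mul_one] at this
        rw [this, pow_modEq α x n hx1 _ _ hv1, pow_one]
    · rintro x ⟨hx, hx1, hx2⟩
      refine ⟨hβ x hx, ?_, ?_⟩
      · have h1 := comm_one α β I v hα hrel n x hx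
        rw [hx1] at h1
        have h2 : ((α ^ (v * n)) ^ (v ^ (n * p - 1))) (β x) = β x := pow_fix _ _ h1.symm _
        rw [← pow_mul] at h2
        refine Eq.trans (pow_modEq α (β x) (n * p) (hαm _ (hβ x hx)) _ _ ?_) h2
        have h3 : v * n * v ^ (n * p - 1) = v ^ (n * p) * n := by
          rw [mul_right_comm, ← pow_succ', Nat.sub_add_cancel hm]
        rw [h3]
        have := hv.symm.mul_right n
        rwa [one_mul] at this
      · rw [← AlgHom.mul_apply, ← pow_succ, pow_succ', AlgHom.mul_apply, hx2]

end rel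

/-! ### Descent from the algebraic closure -/

section descent
open TensorProduct
variable {F : Type*} [Field F] (K : Type*) [Field K] [Algebra F K]
  {P : Type*} [CommRing P] [Algebra F P]

/-- slice map -/
noncomputable def slice (l : K →ₗ[F] F) : K ⊗[F] P →ₗ[F] P :=
  (TensorProduct.lid F P).toLinearMap ∘ₗ l.rTensor P

@[simp] lemma slice_tmul (l : K →ₗ[F] F) (c : K) (y : P) : slice K l (c ⊗ₜ[F] y) = l c • y := by
  simp [slice]

lemma mem_baseChange_iff_slice (N : Submodule F P) (z : K ⊗[F] P) :
    z ∈ N.baseChange K ↔ ∀ l : K →ₗ[F] F, slice K l z ∈ N := by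
  constructor
  · intro hz l
    rw [Submodule.baseChange_eq_span] at hz
    have : ∀ c : K, slice K l (c • z) ∈ N := by
      induction hz using Submodule.span_induction with
      | zero => intro c; simp
      | add x y _ _ hx hy => intro c; rw [smul_add, map_add]; exact N.add_mem (hx c) (hy c)
      | smul d x _ hx => intro c; rw [smul_smul]; exact hx _
      | mem x hx =>
        obtain ⟨y, hy, rfl⟩ := hx
        intro c
        simp only [TensorProduct.mk_apply, TensorProduct.smul_tmul', slice_tmul]
        exact N.smul_mem _ hy
    simpa using this 1
  · intro h
    classical
    let B := Module.Basis.ofVectorSpace F K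
    have hz := (TensorProduct.equivFinsuppOfBasisLeft (N := P) B).symm_apply_apply z
    rw [TensorProduct.equivFinsuppOfBasisLeft_symm_apply] at hz
    rw [← hz]
    refine Submodule.sum_mem _ fun i _ => ?_
    refine Submodule.tmul_mem_baseChange_of_mem _ ?_
    rw [TensorProduct.equivFinsuppOfBasisLeft_apply]
    exact h (B.coord i)

/-- base change of an algebra endomorphism -/
noncomputable def bc (α : P →ₐ[F] P) : K ⊗[F] P →ₐ[K] K ⊗[F] P :=
  Algebra.TensorProduct.map (AlgHom.id K K) α

@[simp] lemma bc_tmul (α : P →ₐ[F] P) (c : K) (y : P) : bc K α (c ⊗ₜ[F] y) = c ⊗ₜ α y := by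
  simp [bc]

lemma bc_pow_tmul (α : P →ₐ[F] P) (n : ℕ) (c : K) (y : P) :
    (bc K α ^ n) (c ⊗ₜ[F] y) = c ⊗ₜ (α ^ n) y := by
  induction n generalizing y with
  | zero => simp
  | succ n ih => rw [pow_succ, AlgHom.mul_apply, bc_tmul, ih, pow_succ, AlgHom.mul_apply]

lemma slice_bc (l : K →ₗ[F] F) (α : P →ₐ[F] P) (z : K ⊗[F] P) :
    slice K l (bc K α z) = α (slice K l z) := by
  induction z with
  | zero => simp
  | tmul c y => simp
  | add x y hx hy => simp only [map_add, hx, hy]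

lemma eq_on_baseChange (I : Submodule F P) (f g : K ⊗[F] P →ₗ[K] K ⊗[F] P)
    (h : ∀ x ∈ I, f (1 ⊗ₜ x) = g (1 ⊗ₜ x)) : ∀ z ∈ I.baseChange K, f z = g z := by
  intro z hz
  rw [Submodule.baseChange_eq_span] at hz
  induction hz using Submodule.span_induction with
  | zero => rw [map_zero, map_zero]
  | add x y _ _ hx hy => rw [map_add, map_add, hx, hy]
  | smul c x _ hx => rw [map_smul, map_smul, hx]
  | mem x hx =>
    obtain ⟨y, hy, rfl⟩ := hx
    exact h y hy

lemma map_baseChange_mem (I : Submodule F P) (α : P →ₐ[F] P) (h : ∀ x ∈ I, α x ∈ I) :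
    ∀ z ∈ I.baseChange K, bc K α z ∈ I.baseChange K := by
  intro z hz
  rw [mem_baseChange_iff_slice] at hz ⊢
  intro l
  rw [slice_bc]
  exact h _ (hz l)

open scoped Pointwise in
lemma tmul_mem_pow (I : Submodule F P) (t : ℕ) (f : P) (hf : f ∈ I ^ t) :
    (1 : K) ⊗ₜ[F] f ∈ (I.baseChange K) ^ t := by
  rw [← Submodule.span_eq I, Submodule.span_pow] at hf
  induction hf using Submodule.span_induction with
  | zero => simp
  | add x y _ _ hx hy => rw [TensorProduct.tmul_add]; exact Submodule.add_mem _ hx hy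
  | smul c x _ hx =>
    rw [TensorProduct.tmul_smul, ← algebraMap_smul K c]; exact Submodule.smul_mem _ _ hx
  | mem x hx =>
    obtain ⟨w, rfl⟩ := Set.mem_pow.1 hx
    refine Submodule.pow_subset_pow _ (Set.mem_pow.2
      ⟨fun i => ⟨(1 : K) ⊗ₜ (w i : P), Submodule.tmul_mem_baseChange_of_mem _ (w i).2⟩, ?_⟩)
    rw [List.prod_ofFn, List.prod_ofFn]
    exact (map_prod (Algebra.TensorProduct.includeRight : P →ₐ[F] K ⊗[F] P) _ _).symm

open scoped Pointwise in
lemma baseChange_pow_le (J : Submodule F P) (t : ℕ) :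
    (J.baseChange K) ^ t ≤ (J ^ t).baseChange K := by
  rw [Submodule.baseChange_eq_span, Submodule.span_pow, Submodule.span_le]
  intro x hx
  obtain ⟨w, rfl⟩ := Set.mem_pow.1 hx
  choose y hy hyw using fun i => (w i).2
  have : (List.ofFn fun i => ((w i : K ⊗[F] P))).prod = (1 : K) ⊗ₜ[F] ∏ i, y i := by
    rw [List.prod_ofFn]
    refine Eq.trans ?_
      (map_prod (Algebra.TensorProduct.includeRight : P →ₐ[F] K ⊗[F] P) y Finset.univ).symm
    exact Finset.prod_congr rfl fun i _ => (hyw i).symm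
  rw [SetLike.mem_coe, this]
  refine Submodule.tmul_mem_baseChange_of_mem _ ?_
  refine Submodule.pow_subset_pow _ (Set.mem_pow.2 ⟨fun i => ⟨y i, hy i⟩, ?_⟩)
  rw [List.prod_ofFn]

theorem rel_main_field (α β : P →ₐ[F] P) (v : ℕ) (m : ℕ)
    (I : Submodule F P) (hm : 0 < m) (hmF : (m : F) ≠ 0) (hv : v ^ m ≡ 1 [MOD m]) (hI : I * I ≤ I)
    (hα : ∀ x ∈ I, α x ∈ I) (hβ : ∀ x ∈ I, β x ∈ I)
    (hαm : ∀ x ∈ I, (α ^ m) x = x) (hβm : ∀ x ∈ I, (β ^ m) x = x)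
    (hrel : ∀ x ∈ I, β (α x) = (α ^ v) (β x))
    (k t : ℕ) (f : P) (hkt : (k + 1) * m ≤ t) (hf : f ∈ I ^ t) (hαf : α f = f) (hβf : β f = f) :
    f ∈ (invSub I α β) ^ (k + 1) := by
  let K := AlgebraicClosure F
  have hmK : (m : K) ≠ 0 := by
    intro h
    apply hmF
    apply (algebraMap F K).injective
    simpa using h
  have key := rel_main (K := K) (P := K ⊗[F] P) (bc K α) (bc K β) v m (I.baseChange K) hm hmK hv
    (by
      refine Submodule.mul_le.2 ?_
      have := baseChange_pow_le K I 2
      intro x hx y hy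
      have h1 := this (by rw [pow_two]; exact Submodule.mul_mem_mul hx hy)
      have hI2 : I ^ 2 ≤ I := by rw [pow_two]; exact hI
      exact Submodule.baseChange_mono K hI2 h1)
    (map_baseChange_mem K I α hα) (map_baseChange_mem K I β hβ)
    (eq_on_baseChange K I (bc K α ^ m).toLinearMap LinearMap.id fun x hx => by
      rw [AlgHom.toLinearMap_apply, bc_pow_tmul, hαm x hx, LinearMap.id_apply])
    (eq_on_baseChange K I (bc K β ^ m).toLinearMap LinearMap.id fun x hx => by
      rw [AlgHom.toLinearMap_apply, bc_pow_tmul, hβm x hx, LinearMap.id_apply])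
    (eq_on_baseChange K I ((bc K β).toLinearMap ∘ₗ (bc K α).toLinearMap)
      ((bc K α ^ v).toLinearMap ∘ₗ (bc K β).toLinearMap) fun x hx => by
      rw [LinearMap.comp_apply, LinearMap.comp_apply, AlgHom.toLinearMap_apply,
        AlgHom.toLinearMap_apply, AlgHom.toLinearMap_apply, AlgHom.toLinearMap_apply,
        bc_tmul, bc_tmul, bc_tmul, bc_pow_tmul, hrel x hx])
    k t (1 ⊗ₜ f) hkt (tmul_mem_pow K I t f hf) (by simp [hαf]) (by simp [hβf])
  have hle : invSub (I.baseChange K) (bc K α) (bc K β) ≤ (invSub I α β).baseChange K := by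
    rintro z ⟨hz, hz1, hz2⟩
    rw [mem_baseChange_iff_slice] at hz ⊢
    intro l
    refine ⟨hz l, ?_, ?_⟩
    · rw [← slice_bc, hz1]
    · rw [← slice_bc, hz2]
  have h2 := baseChange_pow_le K (invSub I α β) (k + 1) (pow_le_pow_left' hle (k + 1) key)
  obtain ⟨l, hl⟩ := LinearMap.exists_leftInverse_of_injective (Algebra.linearMap F K)
    (LinearMap.ker_eq_bot.2 (algebraMap F K).injective)
  have hl1 : l 1 = 1 := by simpa using LinearMap.congr_fun hl 1
  have h3 := (mem_baseChange_iff_slice K _ _).1 h2 l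
  rwa [slice_tmul, hl1, one_smul] at h3

end descent

/-! ### Application to the polynomial ring -/

section poly
variable {F : Type*} [Field F] {G : Type*} [Group G] {d : ℕ}
    (ρ : G →* Matrix.GeneralLinearGroup (Fin d) F)

/-- `polyAct` as an algebra homomorphism -/
noncomputable def pact (g : G) : MvPolynomial (Fin d) F →ₐ[F] MvPolynomial (Fin d) F :=
  MvPolynomial.aeval (fun i => ∑ j, ((ρ g).val i j) • (MvPolynomial.X j))

lemma pact_X (g : G) (i : Fin d) :
    pact ρ g (X i) = ∑ j, ((ρ g).val i j) • (MvPolynomial.X j) := by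
  simp [pact]

lemma pact_mul (g h : G) : pact ρ g * pact ρ h = pact ρ (h * g) := by
  refine MvPolynomial.algHom_ext fun i => ?_
  rw [AlgHom.mul_apply, pact_X, pact_X, map_sum]
  simp_rw [map_smul, pact_X, Finset.smul_sum, smul_smul]
  rw [Finset.sum_comm]
  simp [Matrix.mul_apply, Finset.sum_smul]

lemma pact_one : pact ρ 1 = 1 := by
  refine MvPolynomial.algHom_ext fun i => ?_
  rw [pact_X]
  simp [Matrix.one_apply]

lemma pact_pow (g : G) (n : ℕ) : pact ρ g ^ n = pact ρ (g ^ n) := by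
  induction n with
  | zero => simp [pact_one]
  | succ n ih => rw [pow_succ, ih, pact_mul, pow_succ']

lemma pact_homog (g : G) (n : ℕ) (f : MvPolynomial (Fin d) F) (hf : f.IsHomogeneous n) :
    (pact ρ g f).IsHomogeneous n := by
  have := hf.aeval (fun i => ∑ j, ((ρ g).val i j) • (MvPolynomial.X j : MvPolynomial (Fin d) F))
    (n := 1) (fun i => IsHomogeneous.sum _ _ _ fun j _ => by
      rw [smul_eq_C_mul]
      simpa using (isHomogeneous_C _ _).mul (isHomogeneous_X F j))
  rw [one_mul] at this
  exact this

lemma pact_component (g : G) (n : ℕ) (f : MvPolynomial (Fin d) F) :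
    homogeneousComponent n (pact ρ g f) = pact ρ g (homogeneousComponent n f) := by
  conv_lhs => rw [← sum_homogeneousComponent f, map_sum, map_sum]
  have h : ∀ i, homogeneousComponent n (pact ρ g (homogeneousComponent i f)) =
      if n = i then pact ρ g (homogeneousComponent n f) else 0 := by
    intro i
    rw [homogeneousComponent_of_mem
      (pact_homog ρ g i _ (homogeneousComponent_isHomogeneous i f))]
    split_ifs with h1 <;> simp_all
  simp_rw [h]
  rw [Finset.sum_ite_eq]
  split_ifs with h1
  · rfl
  · rw [homogeneousComponent_eq_zero, map_zero]
    simpa using h1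

lemma constantCoeff_pact (g : G) (f : MvPolynomial (Fin d) F) :
    constantCoeff (pact ρ g f) = constantCoeff f := by
  have := pact_component ρ g 0 f
  simp only [homogeneousComponent_zero, algHom_C, ← constantCoeff_eq] at this
  exact C_injective (Fin d) F (by simpa [algebraMap_eq] using this)

/-- augmentation ideal as a subspace -/
def aug (F : Type*) [Field F] (d : ℕ) : Submodule F (MvPolynomial (Fin d) F) where
  carrier := {f | constantCoeff f = 0}
  zero_mem' := map_zero _
  add_mem' := fun {x y} hx hy => by
    change constantCoeff _ = _
    rw [map_add, hx, hy, add_zero]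
  smul_mem' := fun c x hx => by
    change constantCoeff _ = _
    rw [smul_eq_C_mul, map_mul, hx, mul_zero]

end poly

open scoped Pointwise in
/-- For any `G`-module `V` of `G = C_m ⋉_φ C_m` over a field of characteristic
not dividing `m²`, the generalized Noether number satisfies
`β_k(C_m ⋉_φ C_m, V) ≤ km + m − 1`. -/
theorem betaK_semidirect_le (m k : ℕ) (hm : 0 < m) (hk : 0 < k)
    (φ : Multiplicative (ZMod m) →* MulAut (Multiplicative (ZMod m)))
    (F : Type*) [Field F] (hF : ¬ (ringChar F ∣ m ^ 2)) (d : ℕ)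
    (ρ : (Multiplicative (ZMod m) ⋊[φ] Multiplicative (ZMod m)) →*
      Matrix.GeneralLinearGroup (Fin d) F) :
    BetaKBoundLe ρ k (k * m + m - 1) := by
  have : NeZero m := ⟨hm.ne'⟩
  have hmF : (m : F) ≠ 0 := by
    intro h
    apply hF
    rw [← ringChar.spec]
    push_cast
    rw [h]; simp
  let u : Multiplicative (ZMod m) := Multiplicative.ofAdd 1
  have hgen : ∀ a : Multiplicative (ZMod m), ∃ i : ℕ, a = u ^ i := by
    intro a
    refine ⟨(Multiplicative.toAdd a).val, ?_⟩
    apply Multiplicative.toAdd.injective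
    simp [u]
  have hum : u ^ m = 1 := by
    apply Multiplicative.toAdd.injective
    simp [u]
  obtain ⟨v, hv⟩ := hgen (φ u u)
  have hvj : ∀ j : ℕ, (φ u ^ j) u = u ^ (v ^ j) := by
    intro j
    induction j with
    | zero => simp
    | succ j ih => rw [pow_succ', MulAut.mul_apply, ih, map_pow, hv, ← pow_mul, pow_succ']
  have hvm : v ^ m ≡ 1 [MOD m] := by
    have h := hvj m
    rw [← map_pow, hum, map_one, MulAut.one_apply] at h
    have h2 := congrArg Multiplicative.toAdd h
    simp only [u, toAdd_pow, toAdd_ofAdd, nsmul_eq_mul, mul_one] at h2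
    rw [← ZMod.natCast_eq_natCast_iff, ← h2, Nat.cast_one]
  let x : Multiplicative (ZMod m) ⋊[φ] Multiplicative (ZMod m) := SemidirectProduct.inl u
  let y : Multiplicative (ZMod m) ⋊[φ] Multiplicative (ZMod m) := SemidirectProduct.inr u⁻¹
  have hxy : x * y = y * x ^ v := by
    have h := SemidirectProduct.inl_aut (φ := φ) u u
    have h2 : x ^ v = SemidirectProduct.inl (φ u u) := by rw [hv, map_pow]
    rw [h2, h]
    simp [x, y, mul_assoc]
  have hxm : x ^ m = 1 := by simp only [x]; rw [← map_pow, hum, map_one]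
  have hym : y ^ m = 1 := by simp only [y]; rw [← map_pow, inv_pow, hum, inv_one, map_one]
  have hinv : ∀ f, pact ρ x f = f → pact ρ y f = f → IsPolyInvariant ρ f := by
    intro f h1 h2 g
    change pact ρ g f = f
    obtain ⟨i, hi⟩ := hgen g.left
    obtain ⟨j, hj⟩ := hgen g.right⁻¹
    have hg : g = x ^ i * y ^ j := by
      have hxi : x ^ i = SemidirectProduct.inl g.left := by rw [hi, map_pow]
      have hyj : y ^ j = SemidirectProduct.inr g.right := by
        rw [← inv_inv g.right, hj, ← inv_pow, map_pow]
      rw [hxi, hyj, SemidirectProduct.inl_left_mul_inr_right]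
    rw [hg, ← pact_mul, AlgHom.mul_apply, ← pact_pow, ← pact_pow, pow_fix _ _ h1, pow_fix _ _ h2]
  intro f hf hf0
  rw [← sum_homogeneousComponent f]
  refine Submodule.sum_mem _ fun t _ => ?_
  set c := homogeneousComponent t f with hc
  have hcinv : IsPolyInvariant ρ c := by
    intro g
    change pact ρ g c = c
    have h1 : pact ρ g f = f := hf g
    rw [hc, ← pact_component, h1]
  have hc0 : constantCoeff c = 0 := by
    rw [constantCoeff_eq, hc, coeff_homogeneousComponent]
    split_ifs
    · rw [← constantCoeff_eq]; exact hf0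
    · rfl
  have hch : c.IsHomogeneous t := homogeneousComponent_isHomogeneous t f
  by_cases ht : t ≤ k * m + m - 1
  · exact Submodule.subset_span (Or.inl ⟨hcinv, hc0, hch.totalDegree_le.trans ht⟩)
  · have hmem : c ∈ (aug F d) ^ t := by
      have h1 : c ∈ homogeneousSubmodule (Fin d) F t := hch
      rw [← homogeneousSubmodule_one_pow] at h1
      refine pow_le_pow_left' (a := homogeneousSubmodule (Fin d) F 1) ?_ t h1
      intro z hz
      change constantCoeff z = 0
      rw [constantCoeff_eq]
      exact IsHomogeneous.coeff_eq_zero hz (by simp)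
    have hmain := rel_main_field (pact ρ x) (pact ρ y) v m (aug F d) hm hmF hvm
      (Submodule.mul_le.2 fun a ha b hb => by
        change constantCoeff _ = _
        rw [map_mul, ha, zero_mul])
      (fun z hz => (constantCoeff_pact ρ x z).trans hz)
      (fun z hz => (constantCoeff_pact ρ y z).trans hz)
      (fun z _ => by rw [pact_pow, hxm, pact_one]; rfl)
      (fun z _ => by rw [pact_pow, hym, pact_one]; rfl)
      (fun z _ => by
        rw [pact_pow, ← AlgHom.mul_apply, ← AlgHom.mul_apply, pact_mul, pact_mul, hxy])
      k t c (by rw [add_mul, one_mul]; omega) hmem (hcinv x) (hcinv y)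
    rw [← Submodule.span_eq (invSub _ _ _), Submodule.span_pow] at hmain
    refine Submodule.span_mono ?_ hmain
    intro z hz
    obtain ⟨w, hw⟩ := Set.mem_pow.1 hz
    refine Or.inr ⟨_, by simp, ?_, hw⟩
    intro q hq
    obtain ⟨i, rfl⟩ := (List.mem_ofFn' _ _).1 hq
    obtain ⟨h1, h2, h3⟩ := (w i).2
    exact ⟨hinv _ h2 h3, h1⟩
end
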